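/- Let k be an algebraically closed field of characteristic 0. The ring R_8 of SL_2(k)-invariants in k[A_0,...,A_8] is finitely generated as a module over its subalgebra k[J_2, J_3, J_4, J_5, J_6, J_7]. -/

import Mathlib

noncomputable section

open MvPolynomial


/-- the generic binary form of degree d, with coefficients the variables A_0, ..., A_d -/
def genForm (k : Type*) [Field k] (d : ℕ) :
    MvPolynomial (Fin 2) (MvPolynomial (Fin (d + 1)) k) :=
  ∑ i : Fin (d + 1), C (X i) * X 0 ^ (i : ℕ) * X 1 ^ (d - (i : ℕ))

/-- the generic binary form after the substitution (X,Y) ↦ (aX+bY, cX+dY) -/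
def substGen (k : Type*) [Field k] (d : ℕ) (g : Matrix (Fin 2) (Fin 2) k) :
    MvPolynomial (Fin 2) (MvPolynomial (Fin (d + 1)) k) :=
  aeval (fun i : Fin 2 => C (C (g i 0)) * X 0 + C (C (g i 1)) * X 1) (genForm k d)

/-- the i-th coefficient of the transformed generic binary form, as a polynomial
in the coefficients A_0, ..., A_d -/
def actPoly (k : Type*) [Field k] (d : ℕ) (g : Matrix (Fin 2) (Fin 2) k) :
    Fin (d + 1) → MvPolynomial (Fin (d + 1)) k := fun i =>
  coeff (Finsupp.single (0 : Fin 2) (i : ℕ) + Finsupp.single (1 : Fin 2) (d - (i : ℕ)))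
    (substGen k d g)

/-- the action I ↦ I^g on the coordinate ring k[A_0,...,A_d], given by
(I^g)(f) = I(g(f)) -/
def actHom (k : Type*) [Field k] (d : ℕ) (g : Matrix (Fin 2) (Fin 2) k) :
    MvPolynomial (Fin (d + 1)) k →ₐ[k] MvPolynomial (Fin (d + 1)) k :=
  aeval (actPoly k d g)

/-- the ring R_d of SL_2(k)-invariants in k[A_0,...,A_d] -/
def invariantRing (k : Type*) [Field k] (d : ℕ) :
    Subalgebra k (MvPolynomial (Fin (d + 1)) k) :=
  ⨅ g : Matrix.SpecialLinearGroup (Fin 2) k,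
    AlgHom.equalizer (actHom k d (g : Matrix (Fin 2) (Fin 2) k)) (AlgHom.id k _)

/-- the nullcone N_d: the common zero set of all homogeneous invariants of positive degree -/
def nullcone (k : Type*) [Field k] (d : ℕ) : Set (Fin (d + 1) → k) :=
  {a | ∀ I ∈ invariantRing k d, ∀ n : ℕ, 0 < n → I.IsHomogeneous n → eval a I = 0}


variable (k : Type*) [Field k]

/-- the r-th transvectant of binary forms over a k-algebra R, for forms of degrees n, m -/
def transvectantA (R : Type*) [CommRing R] [Algebra k R] (n m r : ℕ)
    (f g : MvPolynomial (Fin 2) R) : MvPolynomial (Fin 2) R :=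
  C (algebraMap k R ((((m - r).factorial * (n - r).factorial : ℕ) : k) /
      ((n.factorial * m.factorial : ℕ) : k))) *
    ∑ j ∈ Finset.range (r + 1),
      C ((-1 : R) ^ j * (r.choose j : R)) *
        ((fun p => pderiv (0 : Fin 2) p)^[r - j] ((fun p => pderiv (1 : Fin 2) p)^[j] f)) *
        ((fun p => pderiv (0 : Fin 2) p)^[j] ((fun p => pderiv (1 : Fin 2) p)^[r - j] g))

/-- the generic binary octavic, with coefficients the variables a_0, ..., a_8 -/
def genOct : MvPolynomial (Fin 2) (MvPolynomial (Fin 9) k) :=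
  ∑ i : Fin 9, C (X i) * X 0 ^ (i : ℕ) * X 1 ^ (8 - (i : ℕ))

def covgP := transvectantA k (MvPolynomial (Fin 9) k) 8 8 4 (genOct k) (genOct k)
def covkP := transvectantA k (MvPolynomial (Fin 9) k) 8 8 6 (genOct k) (genOct k)
def covhP := transvectantA k (MvPolynomial (Fin 9) k) 4 4 2 (covkP k) (covkP k)
def covmP := transvectantA k (MvPolynomial (Fin 9) k) 8 4 4 (genOct k) (covkP k)

/-- J_2 as a polynomial in the coefficients a_0, ..., a_8 -/
def JP2 : MvPolynomial (Fin 9) k :=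
  (2 ^ 2 * 5 * 7 : MvPolynomial (Fin 9) k) *
    constantCoeff (transvectantA k (MvPolynomial (Fin 9) k) 8 8 8 (genOct k) (genOct k))
def JP3 : MvPolynomial (Fin 9) k :=
  C ((2 ^ 4 * 5 ^ 2 * 7 ^ 3 : k) / 3) *
    constantCoeff (transvectantA k (MvPolynomial (Fin 9) k) 8 8 8 (genOct k) (covgP k))
def JP4 : MvPolynomial (Fin 9) k :=
  (2 ^ 9 * 3 * 7 ^ 4 : MvPolynomial (Fin 9) k) *
    constantCoeff (transvectantA k (MvPolynomial (Fin 9) k) 4 4 4 (covkP k) (covkP k))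
def JP5 : MvPolynomial (Fin 9) k :=
  (2 ^ 9 * 5 * 7 ^ 5 : MvPolynomial (Fin 9) k) *
    constantCoeff (transvectantA k (MvPolynomial (Fin 9) k) 4 4 4 (covmP k) (covkP k))
def JP6 : MvPolynomial (Fin 9) k :=
  (2 ^ 14 * 3 ^ 2 * 7 ^ 6 : MvPolynomial (Fin 9) k) *
    constantCoeff (transvectantA k (MvPolynomial (Fin 9) k) 4 4 4 (covkP k) (covhP k))
def JP7 : MvPolynomial (Fin 9) k :=
  (2 ^ 14 * 3 * 5 * 7 ^ 7 : MvPolynomial (Fin 9) k) *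
    constantCoeff (transvectantA k (MvPolynomial (Fin 9) k) 4 4 4 (covmP k) (covhP k))

/-!
The infinitesimal action of `SL₂` on the coordinate ring is a locally nilpotent representation of
`sl₂`, whose extremal projector is a Reynolds operator. Hilbert's argument then applies: if some
invariants of positive degree have no common zero outside the nullcone, the Nullstellensatz shows
that they generate the ideal of all invariants of positive degree up to radical, and the Reynolds
operator turns this into finite generation of the invariant ring over the algebra they generate.

Transvectants are covariant because Cayley's Ω-process commutes with `SL₂`, so `J₂, …, J₇` are
invariant. By torus degeneration an octavic with a root of multiplicity at least five lies in the
nullcone. To find this root when `J₂, …, J₇` vanish, note that `J₄ ∼ (κ, κ)⁴` and `J₆ ∼ (κ, h)⁴`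
generate the invariants of the quartic `κ`, so `κ` has a root of multiplicity at least three,
which a shear and a reversal move to a fixed place. The cases where `κ` has a triple root, has a
quadruple root or is zero are then settled by elimination.
-/

section HilbertFiniteness

variable {σ k : Type*} [Field k]

theorem homogeneousComponent_mul_of_isHomogeneous {p q : MvPolynomial σ k} {m : ℕ}
    (hq : q.IsHomogeneous m) (n : ℕ) :
    homogeneousComponent n (p * q) =
      if m ≤ n then homogeneousComponent (n - m) p * q else 0 := by
  let := MvPolynomial.gradedAlgebra (σ := σ) (R := k)
  have h := DirectSum.coe_decompose_mul_of_right_mem (homogeneousSubmodule σ k) n (a := p) hq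
  simp only [decomposition.decompose'_apply, ← DirectSum.Decomposition.decompose'_eq] at h
  exact h

/-- A subalgebra of a polynomial ring that is graded by the degree. -/
def IsGradedSubalgebra (R : Subalgebra k (MvPolynomial σ k)) : Prop :=
  ∀ x ∈ R, ∀ n, homogeneousComponent n x ∈ R

/-- The homogeneous elements of positive degree of a subalgebra, that is, the homogeneous
elements of its irrelevant ideal. -/
def positivePart (R : Subalgebra k (MvPolynomial σ k)) : Set (MvPolynomial σ k) :=
  {x | x ∈ R ∧ ∃ n, 0 < n ∧ x.IsHomogeneous n}

variable {R : Subalgebra k (MvPolynomial σ k)}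

/- Applying `ρ` and then the projection to degree `n` to an expression `x = ∑ s g` replaces the
arbitrary coefficients `s` by homogeneous coefficients in `R`. -/
theorem mem_of_mem_ideal_span_of_isHomogeneous (hR : IsGradedSubalgebra R)
    (ρ : MvPolynomial σ k →ₗ[R] R) (hρ : ∀ r : R, ρ r = r)
    {G : Set (MvPolynomial σ k)} (hGR : G ⊆ R) {n : ℕ} {M : AddSubmonoid (MvPolynomial σ k)}
    (hM : ∀ g ∈ G, ∃ m, g.IsHomogeneous m ∧
      (m ≤ n → ∀ c ∈ R, c.IsHomogeneous (n - m) → c * g ∈ M))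
    {x : MvPolynomial σ k} (hxR : x ∈ R) (hxn : x.IsHomogeneous n) (hxG : x ∈ Ideal.span G) :
    x ∈ M := by
  have key : ∀ y ∈ Ideal.span G, homogeneousComponent n (ρ y : MvPolynomial σ k) ∈ M := by
    intro y hy
    induction hy using Submodule.closure_induction with
    | zero => simp only [map_zero, ZeroMemClass.coe_zero, zero_mem]
    | add y z _ _ hy hz => simpa only [map_add, AddMemClass.coe_add] using add_mem hy hz
    | smul_mem s g hg =>
      obtain ⟨m, hgm, hgM⟩ := hM g hg
      have hsg : (ρ (s • g) : MvPolynomial σ k) = ρ s * g := by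
        have h := ρ.map_smul ⟨g, hGR hg⟩ s
        rw [Subalgebra.smul_def, smul_eq_mul, mul_comm] at h
        rw [smul_eq_mul, h, smul_eq_mul, mul_comm, Subalgebra.coe_mul]
      rw [hsg, homogeneousComponent_mul_of_isHomogeneous hgm]
      split_ifs with hmn
      · exact hgM hmn _ (hR _ (ρ s).2 _) (homogeneousComponent_isHomogeneous _ _)
      · exact zero_mem M
  have hx := key x hxG
  rwa [hρ ⟨x, hxR⟩, homogeneousComponent_eq_self hxn] at hx

theorem exists_forall_mem_pow_span_positivePart [Finite σ] (hR : IsGradedSubalgebra R)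
    (ρ : MvPolynomial σ k →ₗ[R] R) (hρ : ∀ r : R, ρ r = r) :
    ∃ e : ℕ, ∀ j n, j * e < n → ∀ x ∈ R, x.IsHomogeneous n →
      x ∈ Ideal.span (positivePart R) ^ j := by
  obtain ⟨G, hGP, hG⟩ : ∃ G : Finset (MvPolynomial σ k), (G : Set _) ⊆ positivePart R ∧
      Ideal.span (positivePart R) = Ideal.span (G : Set (MvPolynomial σ k)) :=
    (Submodule.fg_span_iff_fg_span_finset_subset (positivePart R)).1
      (IsNoetherian.noetherian (Ideal.span (positivePart R)))
  choose! deg _ hdeg using fun g (hg : g ∈ G) => (hGP hg).2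
  refine ⟨G.sup deg, fun j => ?_⟩
  induction j with
  | zero => simp only [pow_zero, Ideal.one_eq_top, Submodule.mem_top, implies_true]
  | succ j ih =>
    intro n hn x hxR hxn
    have hxP : x ∈ Ideal.span (positivePart R) :=
      Ideal.subset_span ⟨hxR, n, (Nat.zero_le _).trans_lt hn, hxn⟩
    refine mem_of_mem_ideal_span_of_isHomogeneous hR ρ hρ (G := G) (fun g hg => (hGP hg).1)
      (M := (Ideal.span (positivePart R) ^ (j + 1)).toAddSubmonoid)
      (fun g hg => ⟨deg g, hdeg g hg, fun _ c hcR hc => ?_⟩) hxR hxn (hG ▸ hxP)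
    have hge : deg g ≤ G.sup deg := Finset.le_sup hg
    have hcP : c ∈ Ideal.span (positivePart R) ^ j :=
      ih (n - deg g) (by rw [add_mul] at hn; omega) c hcR hc
    exact pow_succ (Ideal.span (positivePart R)) j ▸
      Ideal.mul_mem_mul hcP (Ideal.subset_span (hGP hg))

theorem exists_span_positivePart_pow_le [Finite σ] [IsAlgClosed k] {J : Set (MvPolynomial σ k)}
    (hJ : ∀ a : σ → k, (∀ j ∈ J, eval a j = 0) → ∀ x ∈ positivePart R, eval a x = 0) :
    ∃ N : ℕ, Ideal.span (positivePart R) ^ N ≤ Ideal.span J := by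
  refine Ideal.exists_pow_le_of_le_radical_of_fg ?_ (IsNoetherian.noetherian _)
  rw [← vanishingIdeal_zeroLocus_eq_radical (K := k), Ideal.span_le]
  intro x hx
  rw [SetLike.mem_coe, mem_vanishingIdeal_iff]
  intro a ha
  rw [aeval_eq_eval]
  refine hJ a (fun j hj => ?_) x hx
  simpa only [aeval_eq_eval] using ha j (Ideal.subset_span hj)

theorem mem_span_adjoin_of_isHomogeneous (hR : IsGradedSubalgebra R)
    (ρ : MvPolynomial σ k →ₗ[R] R) (hρ : ∀ r : R, ρ r = r)
    {J T : Set (MvPolynomial σ k)} (hJ : J ⊆ positivePart R) {D : ℕ}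
    (hlow : ∀ n ≤ D, ∀ x ∈ R, x.IsHomogeneous n → x ∈ Submodule.span (Algebra.adjoin k J) T)
    (hhigh : ∀ n, D < n → ∀ x ∈ R, x.IsHomogeneous n → x ∈ Ideal.span J)
    (n : ℕ) {x : MvPolynomial σ k} (hxR : x ∈ R) (hxn : x.IsHomogeneous n) :
    x ∈ Submodule.span (Algebra.adjoin k J) T := by
  induction n using Nat.strong_induction_on generalizing x with
  | _ n ih =>
    rcases le_or_gt n D with hn | hn
    · exact hlow n hn x hxR hxn
    · refine mem_of_mem_ideal_span_of_isHomogeneous hR ρ hρ (fun j hj => (hJ hj).1)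
        (M := (Submodule.span (Algebra.adjoin k J) T).toAddSubmonoid) (fun j hj => ?_)
        hxR hxn (hhigh n hn x hxR hxn)
      obtain ⟨m, hm, hjm⟩ := (hJ hj).2
      refine ⟨m, hjm, fun hmn c hcR hc => ?_⟩
      have hc' := ih (n - m) (by omega) hcR hc
      have hj' : j ∈ Algebra.adjoin k J := Algebra.subset_adjoin hj
      rw [mul_comm]
      exact Submodule.smul_mem _ (⟨j, hj'⟩ : Algebra.adjoin k J) hc'

theorem exists_finset_span_homogeneous_le [Finite σ] (R : Subalgebra k (MvPolynomial σ k))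
    (D : ℕ) : ∃ T : Finset (MvPolynomial σ k), (T : Set (MvPolynomial σ k)) ⊆ R ∧
      ∀ n ≤ D, ∀ x ∈ R, x.IsHomogeneous n →
        x ∈ Submodule.span k (T : Set (MvPolynomial σ k)) := by
  obtain ⟨T, hT⟩ : (restrictTotalDegree σ k D ⊓ Subalgebra.toSubmodule R).FG :=
    (Module.Finite.iff_fg.1 inferInstance).of_le inf_le_left
  refine ⟨T, fun t ht => ?_, fun n hn x hxR hxn => ?_⟩
  · have : t ∈ restrictTotalDegree σ k D ⊓ Subalgebra.toSubmodule R :=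
      hT ▸ Submodule.subset_span ht
    exact this.2
  · rw [hT]
    exact ⟨(mem_restrictTotalDegree σ D x).2 (hxn.totalDegree_le.trans hn), hxR⟩

theorem exists_finset_span_adjoin_of_zeroLocus [Finite σ] [IsAlgClosed k]
    (hR : IsGradedSubalgebra R) (ρ : MvPolynomial σ k →ₗ[R] R) (hρ : ∀ r : R, ρ r = r)
    {J : Set (MvPolynomial σ k)} (hJ : J ⊆ positivePart R)
    (hnull : ∀ a : σ → k, (∀ j ∈ J, eval a j = 0) → ∀ x ∈ positivePart R, eval a x = 0) :
    ∃ T : Finset (MvPolynomial σ k), (T : Set (MvPolynomial σ k)) ⊆ R ∧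
      ∀ x ∈ R, x ∈ Submodule.span (Algebra.adjoin k J) (T : Set (MvPolynomial σ k)) := by
  obtain ⟨e, he⟩ := exists_forall_mem_pow_span_positivePart hR ρ hρ
  obtain ⟨N, hN⟩ := exists_span_positivePart_pow_le hnull
  obtain ⟨T, hTR, hT⟩ := exists_finset_span_homogeneous_le R (N * e)
  refine ⟨T, hTR, fun x hx => ?_⟩
  rw [← sum_homogeneousComponent x]
  refine Submodule.sum_mem _ fun n _ => mem_span_adjoin_of_isHomogeneous hR ρ hρ hJ (D := N * e)
    (fun n hn x hxR hxn => ?_) (fun n hn x hxR hxn => hN (he N n hn x hxR hxn)) n (hR x hx n)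
    (homogeneousComponent_isHomogeneous n x)
  exact Submodule.span_le_restrictScalars k (Algebra.adjoin k J) _ (hT n hn x hxR hxn)

end HilbertFiniteness

section Sl2Module

open LieModule

variable {k L V : Type*} [Field k] [LieRing L] [LieAlgebra k L] [AddCommGroup V] [Module k V]
  [LieRingModule L V] [LieModule k L V] {h e f : L}

theorem sl2_lie_h_pow_f (t : IsSl2Triple h e f) {x : V} {c : k} (hx : ⁅h, x⁆ = c • x) (n : ℕ) :
    ⁅h, (toEnd k L V f ^ n) x⁆ = (c - 2 * n) • (toEnd k L V f ^ n) x := by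
  induction n with
  | zero => simpa using hx
  | succ n ih =>
    rw [pow_succ', Module.End.mul_apply, toEnd_apply_apply, leibniz_lie, ih, t.lie_lie_smul_f k,
      lie_smul, neg_lie, smul_lie]
    push_cast
    module

theorem sl2_lie_h_pow_e (t : IsSl2Triple h e f) {x : V} {c : k} (hx : ⁅h, x⁆ = c • x) (n : ℕ) :
    ⁅h, (toEnd k L V e ^ n) x⁆ = (c + 2 * n) • (toEnd k L V e ^ n) x := by
  have := sl2_lie_h_pow_f (V := V) t.symm (x := x) (c := -c) (by rw [neg_lie, hx, neg_smul]) n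
  rw [neg_lie, neg_eq_iff_eq_neg] at this
  rw [this]
  module

theorem sl2_lie_e_pow_succ_f (t : IsSl2Triple h e f) {x : V} {c : k} (hx : ⁅h, x⁆ = c • x)
    (n : ℕ) :
    ⁅e, (toEnd k L V f ^ (n + 1)) x⁆ =
      (toEnd k L V f ^ (n + 1)) ⁅e, x⁆ + ((n + 1) * (c - n)) • (toEnd k L V f ^ n) x := by
  induction n with
  | zero =>
    simp only [zero_add, pow_one, toEnd_apply_apply, leibniz_lie e f x, t.lie_e_f, hx, pow_zero,
      Module.End.one_apply, Nat.cast_zero, sub_zero, one_mul]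
    rw [add_comm]
  | succ n ih =>
    rw [pow_succ' _ (n + 1), Module.End.mul_apply, Module.End.mul_apply, toEnd_apply_apply,
      leibniz_lie, ih, t.lie_e_f, sl2_lie_h_pow_f t hx, lie_add, lie_smul,
      ← toEnd_apply_apply k L V f ((toEnd k L V f ^ n) x), ← Module.End.mul_apply, ← pow_succ',
      toEnd_apply_apply]
    push_cast
    module

theorem sl2_lie_f_eq_zero [CharZero k] (t : IsSl2Triple h e f) {x : V} (he : ⁅e, x⁆ = 0)
    (hh : ⁅h, x⁆ = 0) {n : ℕ} (hf : (toEnd k L V f ^ (n + 1)) x = 0) : ⁅f, x⁆ = 0 := by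
  induction n with
  | zero => simpa using hf
  | succ n ih =>
    have key := sl2_lie_e_pow_succ_f (k := k) t (c := 0) (by rw [hh, zero_smul]) (n + 1)
    rw [hf, he, map_zero, lie_zero, zero_add] at key
    refine ih ((smul_eq_zero.1 key.symm).resolve_left (mul_ne_zero ?_ ?_))
    · exact Nat.cast_add_one_ne_zero _
    · rw [zero_sub, neg_ne_zero]
      exact Nat.cast_ne_zero.2 n.succ_ne_zero

/-- The coefficients of the extremal projector of `sl₂` on vectors of weight zero. -/
def extremalCoeff (k : Type*) [Field k] (j : ℕ) : k :=
  (-1) ^ j / (j.factorial * (j + 1).factorial)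

theorem extremalCoeff_succ [CharZero k] (j : ℕ) :
    extremalCoeff k (j + 1) * ((j + 1) * (j + 2)) = -extremalCoeff k j := by
  have h1 : (j.factorial : k) ≠ 0 := Nat.cast_ne_zero.2 j.factorial_ne_zero
  have h2 : (j : k) + 1 ≠ 0 := Nat.cast_add_one_ne_zero j
  have h3 : (j : k) + 1 + 1 ≠ 0 := mod_cast (j + 1).succ_ne_zero
  rw [extremalCoeff, extremalCoeff, Nat.factorial_succ (j + 1), Nat.factorial_succ j]
  push_cast
  field_simp
  ring

theorem sl2_lie_e_sum_extremalCoeff [CharZero k] (t : IsSl2Triple h e f) {x : V}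
    (hh : ⁅h, x⁆ = 0) (n : ℕ) :
    ⁅e, ∑ j ∈ Finset.range (n + 1),
        extremalCoeff k j • (toEnd k L V f ^ j) ((toEnd k L V e ^ j) x)⁆ =
      extremalCoeff k n • (toEnd k L V f ^ n) ((toEnd k L V e ^ (n + 1)) x) := by
  induction n with
  | zero => simp
  | succ n ih =>
    have hw := sl2_lie_h_pow_e (k := k) t (c := 0) (by rw [hh, zero_smul]) (n + 1)
    rw [Finset.sum_range_succ, lie_add, ih, lie_smul, sl2_lie_e_pow_succ_f t hw,
      ← toEnd_apply_apply k L V e, ← Module.End.mul_apply (toEnd k L V e), ← pow_succ',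
      smul_add, smul_smul, add_left_comm, ← add_smul, add_eq_left]
    convert zero_smul k _ using 2
    push_cast
    linear_combination extremalCoeff_succ (k := k) n

theorem support_extremalCoeff_smul_subset {x : V} {n : ℕ} (hn : (toEnd k L V e ^ n) x = 0) :
    (Function.support fun j =>
      extremalCoeff k j • (toEnd k L V f ^ j) ((toEnd k L V e ^ j) x)) ⊆ Finset.range n := by
  intro j hj
  by_contra hnj
  obtain ⟨i, rfl⟩ := Nat.exists_eq_add_of_le' (not_lt.1 (hnj ∘ Finset.mem_range.2))
  simp [pow_add, hn] at hj

/-- The extremal projector `∑ⱼ (-1)ʲ / (j! (j + 1)!) fʲ eʲ` of `sl₂`, which maps the vectors of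
weight zero onto the invariants. -/
def extremalProjector (e f : L) (he : ∀ x : V, ∃ n, (toEnd k L V e ^ n) x = 0) :
    V →ₗ[k] V where
  toFun x := ∑ᶠ j, extremalCoeff k j • (toEnd k L V f ^ j) ((toEnd k L V e ^ j) x)
  map_add' x y := by
    have hfin (z : V) := (he z).elim fun n hn =>
      (Finset.range n).finite_toSet.subset (support_extremalCoeff_smul_subset (f := f) hn)
    rw [← finsum_add_distrib (hfin x) (hfin y)]
    simp only [map_add, smul_add]
  map_smul' c x := by
    simp only [map_smul, RingHom.id_apply, smul_finsum, smul_comm c]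

variable {he : ∀ x : V, ∃ n, (toEnd k L V e ^ n) x = 0}

theorem extremalProjector_apply {x : V} {n : ℕ} (hn : (toEnd k L V e ^ n) x = 0) :
    extremalProjector e f he x =
      ∑ j ∈ Finset.range n, extremalCoeff k j • (toEnd k L V f ^ j) ((toEnd k L V e ^ j) x) :=
  finsum_eq_sum_of_support_subset _ (support_extremalCoeff_smul_subset hn)

theorem extremalProjector_of_lie_e_eq_zero {x : V} (hx : ⁅e, x⁆ = 0) :
    extremalProjector e f he x = x := by
  rw [extremalProjector_apply (n := 1) (by simpa using hx)]
  simp [extremalCoeff]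

theorem extremalProjector_map {m : Module.End k V} (hme : Commute m (toEnd k L V e))
    (hmf : Commute m (toEnd k L V f)) (x : V) :
    extremalProjector e f he (m x) = m (extremalProjector e f he x) := by
  have comm {g : Module.End k V} (hg : Commute m g) (j : ℕ) (y : V) :
      (g ^ j) (m y) = m ((g ^ j) y) := LinearMap.congr_fun (hg.pow_right j).symm y
  obtain ⟨n, hn⟩ := he x
  rw [extremalProjector_apply hn, extremalProjector_apply (n := n) (by rw [comm hme, hn, map_zero])]
  simp only [comm hme, comm hmf, map_sum, map_smul]

theorem lie_e_extremalProjector [CharZero k] (t : IsSl2Triple h e f) {x : V} (hx : ⁅h, x⁆ = 0) :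
    ⁅e, extremalProjector e f he x⁆ = 0 := by
  obtain ⟨n, hn⟩ := he x
  have hn' : (toEnd k L V e ^ (n + 1)) x = 0 := by
    rw [pow_succ', Module.End.mul_apply, hn, map_zero]
  rw [extremalProjector_apply hn', sl2_lie_e_sum_extremalCoeff t hx, hn', map_zero, smul_zero]

theorem lie_h_extremalProjector (t : IsSl2Triple h e f) {x : V} (hx : ⁅h, x⁆ = 0) :
    ⁅h, extremalProjector e f he x⁆ = 0 := by
  obtain ⟨n, hn⟩ := he x
  rw [extremalProjector_apply hn, lie_sum]
  refine Finset.sum_eq_zero fun j _ => ?_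
  rw [lie_smul, sl2_lie_h_pow_f t (sl2_lie_h_pow_e t (c := 0) (by rw [hx, zero_smul]) j),
    zero_add, sub_self, zero_smul, smul_zero]

theorem lie_f_extremalProjector [CharZero k] (t : IsSl2Triple h e f)
    (hf : ∀ x : V, ∃ n, (toEnd k L V f ^ n) x = 0) {x : V} (hx : ⁅h, x⁆ = 0) :
    ⁅f, extremalProjector e f he x⁆ = 0 := by
  obtain ⟨n, hn⟩ := hf (extremalProjector e f he x)
  refine sl2_lie_f_eq_zero (k := k) (n := n) t (lie_e_extremalProjector t hx)
    (lie_h_extremalProjector t hx) ?_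
  rw [pow_succ', Module.End.mul_apply, hn, map_zero]

end Sl2Module

section WeightDerivation

variable {σ k : Type*} [Field k]

/-- The derivation of a polynomial ring that multiplies each monomial by its weight, where the
variable `X i` has weight `w i`. -/
def weightDerivation (k : Type*) [Field k] (w : σ → ℤ) :
    Derivation k (MvPolynomial σ k) (MvPolynomial σ k) :=
  mkDerivation k fun i => w i • X i

theorem weightDerivation_monomial (w : σ → ℤ) (m : σ →₀ ℕ) (c : k) :
    weightDerivation k w (monomial m c) = Finsupp.weight w m • monomial m c := by
  rw [weightDerivation, mkDerivation_monomial, Finsupp.weight_apply, Finsupp.sum, Finsupp.sum,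
    Finset.smul_sum, Finset.sum_smul]
  refine Finset.sum_congr rfl fun i hi => ?_
  have him : Finsupp.single i 1 ≤ m :=
    Finsupp.single_le_iff.2 (Nat.one_le_iff_ne_zero.2 (Finsupp.mem_support_iff.1 hi))
  rw [smul_eq_mul, mul_smul_comm, X, monomial_mul, tsub_add_cancel_of_le him, ← map_zsmul,
    ← map_smul, ← map_zsmul]
  congr 1
  simp only [zsmul_eq_mul, smul_eq_mul, nsmul_eq_mul]
  push_cast
  ring

theorem coeff_weightDerivation (w : σ → ℤ) (p : MvPolynomial σ k) (m : σ →₀ ℕ) :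
    coeff m (weightDerivation k w p) = Finsupp.weight w m • coeff m p := by
  classical
  induction p using MvPolynomial.induction_on' with
  | monomial u a =>
    rw [weightDerivation_monomial, ← map_zsmul, coeff_monomial, coeff_monomial]
    split_ifs with h
    · rw [h]
    · rw [smul_zero]
  | add p q hp hq => rw [map_add, coeff_add, hp, hq, coeff_add, smul_add]

theorem weightDerivation_eq_zero_iff [CharZero k] {w : σ → ℤ} {p : MvPolynomial σ k} :
    weightDerivation k w p = 0 ↔ p.IsWeightedHomogeneous w 0 := by
  simp only [MvPolynomial.ext_iff, coeff_weightDerivation, coeff_zero, smul_eq_zero,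
    IsWeightedHomogeneous, ← or_iff_not_imp_right]

theorem weightedHomogeneousComponent_zero_mul {w : σ → ℤ} {p : MvPolynomial σ k}
    (hp : p.IsWeightedHomogeneous w 0) (q : MvPolynomial σ k) :
    weightedHomogeneousComponent w 0 (p * q) = p * weightedHomogeneousComponent w 0 q := by
  classical
  let := weightedGradedAlgebra k w
  have h := DirectSum.coe_decompose_mul_of_left_mem_zero (weightedHomogeneousSubmodule k w)
    (j := 0) hp (b := q)
  simp only [weightedDecomposition.decompose'_apply, ← DirectSum.Decomposition.decompose'_eq] at h
  exact h

end WeightDerivation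

section LocallyNilpotent

open LieModule

variable {R A : Type*} [CommRing R] [CommRing A] [Algebra R A]

theorem derivation_pow_mul_eq_zero (D : Derivation R A A) {N n m : ℕ} (hN : n + m ≤ N) {a b : A}
    (ha : (toEnd R _ A D ^ n) a = 0) (hb : (toEnd R _ A D ^ m) b = 0) :
    (toEnd R _ A D ^ N) (a * b) = 0 := by
  induction N generalizing n m a b with
  | zero =>
    obtain rfl : n = 0 := by omega
    rw [pow_zero, Module.End.one_apply] at ha
    rw [ha, zero_mul, map_zero]
  | succ N ih =>
    rcases n with _ | n
    · rw [pow_zero, Module.End.one_apply] at ha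
      rw [ha, zero_mul, map_zero]
    rcases m with _ | m
    · rw [pow_zero, Module.End.one_apply] at hb
      rw [hb, mul_zero, map_zero]
    have hDa : (toEnd R _ A D ^ n) (D a) = 0 := by rwa [pow_succ] at ha
    have hDb : (toEnd R _ A D ^ m) (D b) = 0 := by rwa [pow_succ] at hb
    rw [pow_succ, Module.End.mul_apply, toEnd_apply_apply, Derivation.bracket_eq_fun, D.leibniz,
      smul_eq_mul, smul_eq_mul, map_add, ih (by omega) ha hDb, ih (by omega) hb hDa, add_zero]

theorem derivation_exists_pow_eq_zero {σ : Type*}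
    (D : Derivation R (MvPolynomial σ R) (MvPolynomial σ R))
    (hD : ∀ i, ∃ n, (toEnd R _ (MvPolynomial σ R) D ^ n) (X i) = 0) (p : MvPolynomial σ R) :
    ∃ n, (toEnd R _ (MvPolynomial σ R) D ^ n) p = 0 := by
  induction p using MvPolynomial.induction_on with
  | C a => exact ⟨1, by rw [pow_one]; exact derivation_C D a⟩
  | add p q hp hq =>
    obtain ⟨n, hn⟩ := hp
    obtain ⟨m, hm⟩ := hq
    refine ⟨n + m, ?_⟩
    rw [map_add, pow_add, Module.End.mul_apply, Module.End.mul_apply, hm, map_zero,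
      ← Module.End.mul_apply, (Commute.refl _).pow_pow n m, Module.End.mul_apply, hn, map_zero,
      add_zero]
  | mul_X p i hp =>
    obtain ⟨n, hn⟩ := hp
    obtain ⟨m, hm⟩ := hD i
    exact ⟨n + m, derivation_pow_mul_eq_zero D le_rfl hn hm⟩

end LocallyNilpotent

section Reynolds

open LieModule

variable {σ k : Type*} [Field k] [CharZero k]

theorem exists_reynolds_of_isSl2Triple {w : σ → ℤ}
    {E F : Derivation k (MvPolynomial σ k) (MvPolynomial σ k)}
    (t : IsSl2Triple (weightDerivation k w) E F)
    (hE : ∀ p, ∃ n, (toEnd k _ (MvPolynomial σ k) E ^ n) p = 0)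
    (hF : ∀ p, ∃ n, (toEnd k _ (MvPolynomial σ k) F ^ n) p = 0)
    {R : Subalgebra k (MvPolynomial σ k)} (hR : ∀ p, p ∈ R ↔ E p = 0 ∧ F p = 0) :
    ∃ ρ : MvPolynomial σ k →ₗ[R] R, ∀ r : R, ρ r = r := by
  have weight_zero {r} (hr : r ∈ R) : r.IsWeightedHomogeneous w 0 := by
    obtain ⟨hEr, hFr⟩ := (hR r).1 hr
    rw [← weightDerivation_eq_zero_iff, ← t.lie_e_f, Derivation.commutator_apply, hEr, hFr,
      map_zero, map_zero, sub_zero]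
  have lie_zero (p : MvPolynomial σ k) :
      ⁅weightDerivation k w, weightedHomogeneousComponent w 0 p⁆ = 0 :=
    weightDerivation_eq_zero_iff.2 (weightedHomogeneousComponent_isWeightedHomogeneous 0 p)
  have commute {r} {D : Derivation k (MvPolynomial σ k) (MvPolynomial σ k)} (hr : D r = 0) :
      Commute (LinearMap.mulLeft k r) (toEnd k _ (MvPolynomial σ k) D) := by
    refine LinearMap.ext fun p => ?_
    change r * D p = D (r * p)
    rw [D.leibniz, hr, smul_zero, add_zero, smul_eq_mul]
  let π := (extremalProjector E F hE).comp (weightedHomogeneousComponent w 0)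
  have π_mem (p) : π p ∈ R := (hR _).2
    ⟨lie_e_extremalProjector (he := hE) t (lie_zero p),
      lie_f_extremalProjector (he := hE) t hF (lie_zero p)⟩
  have π_mul {r} (hr : r ∈ R) (p) : π (r * p) = r * π p := by
    obtain ⟨hEr, hFr⟩ := (hR r).1 hr
    rw [LinearMap.comp_apply, weightedHomogeneousComponent_zero_mul (weight_zero hr)]
    exact extremalProjector_map (commute hEr) (commute hFr) _
  refine ⟨{ toFun := fun p => ⟨π p, π_mem p⟩
            map_add' := fun p q => Subtype.ext (map_add π p q)
            map_smul' := fun r p => Subtype.ext (π_mul r.2 p) }, fun r => Subtype.ext ?_⟩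
  have hr : weightedHomogeneousComponent w 0 (r : MvPolynomial σ k) = r :=
    (weight_zero r.2).weightedHomogeneousComponent_same
  exact (congrArg (extremalProjector E F hE) hr).trans
    (extremalProjector_of_lie_e_eq_zero ((hR r).1 r.2).1)

end Reynolds

section BinaryForm

variable {A B : Type*} [CommSemiring A] [CommSemiring B] {d : ℕ}

/-- The binary form `∑ aᵢ Xⁱ Yᵈ⁻ⁱ` of degree `d`. -/
def binaryForm (a : Fin (d + 1) → A) : MvPolynomial (Fin 2) A :=
  ∑ i : Fin (d + 1), C (a i) * X 0 ^ (i : ℕ) * X 1 ^ (d - (i : ℕ))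

/-- The coefficient of `Xⁱ Yᵈ⁻ⁱ` in a polynomial in two variables. -/
def formCoeff (d : ℕ) (p : MvPolynomial (Fin 2) A) (i : Fin (d + 1)) : A :=
  coeff (Finsupp.single (0 : Fin 2) (i : ℕ) + Finsupp.single (1 : Fin 2) (d - (i : ℕ))) p

theorem C_mul_X_pow_mul_X_pow (c : A) (m n : ℕ) :
    (C c * X 0 ^ m * X 1 ^ n : MvPolynomial (Fin 2) A) =
      monomial (Finsupp.single 0 m + Finsupp.single 1 n) c := by
  rw [X_pow_eq_monomial, X_pow_eq_monomial, C_mul_monomial, monomial_mul, mul_one, mul_one]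

theorem formCoeff_binaryForm (a : Fin (d + 1) → A) : formCoeff d (binaryForm a) = a := by
  classical
  funext j
  simp only [formCoeff, binaryForm, C_mul_X_pow_mul_X_pow, coeff_sum, coeff_monomial]
  rw [Finset.sum_eq_single j _ (by simp), if_pos rfl]
  intro i _ hij
  refine if_neg fun h => hij (Fin.ext ?_)
  simpa using DFunLike.congr_fun h 0

theorem binaryForm_injective : Function.Injective (binaryForm : (Fin (d + 1) → A) → _) :=
  Function.LeftInverse.injective formCoeff_binaryForm

theorem isHomogeneous_binaryForm (a : Fin (d + 1) → A) : (binaryForm a).IsHomogeneous d := by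
  refine IsHomogeneous.sum _ _ _ fun i _ => ?_
  rw [C_mul_X_pow_mul_X_pow]
  refine isHomogeneous_monomial _ ?_
  rw [map_add, Finsupp.degree_single, Finsupp.degree_single]
  omega

theorem binaryForm_formCoeff {p : MvPolynomial (Fin 2) A} (hp : p.IsHomogeneous d) :
    binaryForm (formCoeff d p) = p := by
  ext m
  by_cases hm : m.degree = d
  · have hsum : m 0 + m 1 = d := by rw [← hm, Finsupp.degree_eq_sum, Fin.sum_univ_two]
    have hm' : Finsupp.single (0 : Fin 2) (m 0) + Finsupp.single (1 : Fin 2) (d - m 0) = m := by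
      have hsub : d - m 0 = m 1 := by omega
      ext i
      fin_cases i <;> simp [hsub]
    have h := congrFun (formCoeff_binaryForm (formCoeff d p)) ⟨m 0, by omega⟩
    simpa only [formCoeff, hm'] using h
  · rw [hp.coeff_eq_zero hm, (isHomogeneous_binaryForm _).coeff_eq_zero hm]

theorem map_binaryForm (φ : A →+* B) (a : Fin (d + 1) → A) :
    map φ (binaryForm a) = binaryForm (φ ∘ a) := by
  simp only [binaryForm, map_sum, map_mul, map_pow, map_C, map_X, Function.comp_apply]

/-- The substitution `(X, Y) ↦ (aX + bY, cX + dY)` attached to a matrix `!![a, b; c, d]`. -/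
def linearSubst (g : Matrix (Fin 2) (Fin 2) A) :
    MvPolynomial (Fin 2) A →ₐ[A] MvPolynomial (Fin 2) A :=
  aeval fun i => C (g i 0) * X 0 + C (g i 1) * X 1

@[simp]
theorem linearSubst_X (g : Matrix (Fin 2) (Fin 2) A) (i : Fin 2) :
    linearSubst g (X i) = C (g i 0) * X 0 + C (g i 1) * X 1 :=
  aeval_X _ _

@[simp]
theorem linearSubst_C (g : Matrix (Fin 2) (Fin 2) A) (c : A) : linearSubst g (C c) = C c :=
  (linearSubst g).commutes c

theorem linearSubst_linearSubst (g h : Matrix (Fin 2) (Fin 2) A) (p : MvPolynomial (Fin 2) A) :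
    linearSubst g (linearSubst h p) = linearSubst (h * g) p := by
  suffices H : (linearSubst g).comp (linearSubst h) = linearSubst (h * g) from
    DFunLike.congr_fun H p
  ext1 i
  simp only [AlgHom.comp_apply, linearSubst_X, map_add, map_mul, linearSubst_C,
    Matrix.mul_apply, Fin.sum_univ_two]
  ring

theorem map_linearSubst (φ : A →+* B) (g : Matrix (Fin 2) (Fin 2) A)
    (p : MvPolynomial (Fin 2) A) :
    map φ (linearSubst g p) = linearSubst (g.map φ) (map φ p) := by
  induction p using MvPolynomial.induction_on with
  | C a => simp
  | add p q hp hq => simp only [map_add, hp, hq]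
  | mul_X p i hp => simp [hp]

theorem isHomogeneous_linearSubst (g : Matrix (Fin 2) (Fin 2) A) {p : MvPolynomial (Fin 2) A}
    (hp : p.IsHomogeneous d) : (linearSubst g p).IsHomogeneous d := by
  have hX (i j : Fin 2) : (C (g i j) * X j : MvPolynomial (Fin 2) A).IsHomogeneous 1 := by
    simpa using (isHomogeneous_C (Fin 2) (g i j)).mul (isHomogeneous_X A j)
  simpa only [linearSubst, one_mul] using hp.aeval _ fun i => (hX i 0).add (hX i 1)

/-- The coefficients of the binary form `f(X + tY, Y)`, where `f` has coefficients `a`. -/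
def shear (t : A) (a : Fin (d + 1) → A) (i : Fin (d + 1)) : A :=
  ∑ j : Fin (d + 1), ((j : ℕ).choose i) * t ^ ((j : ℕ) - i) * a j

theorem shear_zero (a : Fin (d + 1) → A) : shear 0 a = a := by
  funext i
  rw [shear, Finset.sum_eq_single i _ (by simp)]
  · simp
  · intro j _ hji
    rcases lt_or_gt_of_ne hji with hlt | hgt
    · rw [Nat.choose_eq_zero_of_lt hlt, Nat.cast_zero, zero_mul, zero_mul]
    · rw [zero_pow (Nat.sub_ne_zero_of_lt hgt), mul_zero, zero_mul]

theorem binaryForm_shear (t : A) (a : Fin (d + 1) → A) :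
    binaryForm (shear t a) = linearSubst !![1, t; 0, 1] (binaryForm a) := by
  have hrow (j : Fin (d + 1)) :
      (∑ i : Fin (d + 1), C (((j : ℕ).choose i) * t ^ ((j : ℕ) - i) * a j) * X 0 ^ (i : ℕ) *
        X 1 ^ (d - (i : ℕ)) : MvPolynomial (Fin 2) A) =
      C (a j) * (X 0 + C t * X 1) ^ (j : ℕ) * X 1 ^ (d - (j : ℕ)) := by
    rw [Fin.sum_univ_eq_sum_range (fun i => (C (((j : ℕ).choose i) * t ^ ((j : ℕ) - i) * a j) *
      X 0 ^ i * X 1 ^ (d - i) : MvPolynomial (Fin 2) A)), add_pow, Finset.mul_sum, Finset.sum_mul]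
    symm
    refine Finset.sum_subset_zero_on_sdiff (Finset.range_subset_range.2 (by omega)) ?_ ?_
    · intro i hi
      rw [Finset.mem_sdiff, Finset.mem_range, Finset.mem_range, not_lt] at hi
      rw [Nat.choose_eq_zero_of_lt hi.2]
      simp
    · intro i hi
      rw [Finset.mem_range] at hi
      rw [show d - i = (j - i) + (d - j) by omega, pow_add]
      simp only [C_mul, C_pow, mul_pow, map_natCast]
      ring
  simp only [binaryForm, shear, map_sum, Finset.sum_mul]
  rw [Finset.sum_comm]
  refine Finset.sum_congr rfl fun j _ => ?_
  rw [hrow]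
  simp

theorem binaryForm_comp_rev (a : Fin (d + 1) → A) :
    binaryForm (a ∘ Fin.rev) = linearSubst !![0, 1; 1, 0] (binaryForm a) := by
  rw [binaryForm, ← Equiv.sum_comp Fin.revPerm, binaryForm, map_sum]
  refine Finset.sum_congr rfl fun i _ => ?_
  have hi : d - (d - (i : ℕ)) = i := by omega
  simp [Fin.val_rev, hi, mul_right_comm]

end BinaryForm

section Action

variable {k : Type*} [Field k] {d : ℕ}

theorem binaryForm_actPoly (g : Matrix (Fin 2) (Fin 2) k) :
    binaryForm (actPoly k d g) = linearSubst (g.map C) (binaryForm X) := by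
  have hsubst : substGen k d g = linearSubst (g.map C) (binaryForm X) := rfl
  change binaryForm (formCoeff d (substGen k d g)) = _
  rw [binaryForm_formCoeff, hsubst]
  rw [hsubst]
  exact isHomogeneous_linearSubst _ (isHomogeneous_binaryForm _)

theorem actHom_actPoly (g h : Matrix (Fin 2) (Fin 2) k) (i : Fin (d + 1)) :
    actHom k d h (actPoly k d g i) = actPoly k d (h * g) i := by
  refine congrFun (binaryForm_injective (a₁ := actHom k d h ∘ actPoly k d g) ?_) i
  have hmap := map_binaryForm (d := d) (actHom k d h).toRingHom
  have hg : (g.map C).map (actHom k d h).toRingHom = g.map C := by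
    exact Matrix.ext fun i j => (actHom k d h).commutes (g i j)
  have hX : (actHom k d h).toRingHom ∘ X = actPoly k d h := by
    funext i
    exact aeval_X _ _
  calc binaryForm (actHom k d h ∘ actPoly k d g)
      = map (actHom k d h).toRingHom (linearSubst (g.map C) (binaryForm X)) := by
        rw [← binaryForm_actPoly, hmap]; rfl
    _ = linearSubst (g.map C) (linearSubst (h.map C) (binaryForm X)) := by
        rw [map_linearSubst, hg, hmap, hX, binaryForm_actPoly]
    _ = binaryForm (actPoly k d (h * g)) := by
        rw [linearSubst_linearSubst, binaryForm_actPoly, Matrix.map_mul]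

theorem actHom_actHom (g h : Matrix (Fin 2) (Fin 2) k) (I : MvPolynomial (Fin (d + 1)) k) :
    actHom k d h (actHom k d g I) = actHom k d (h * g) I := by
  suffices H : (actHom k d h).comp (actHom k d g) = actHom k d (h * g) from DFunLike.congr_fun H I
  ext1 i
  simpa only [AlgHom.comp_apply, actHom, aeval_X] using actHom_actPoly g h i

theorem actPoly_upper (t : k) : actPoly k d !![1, t; 0, 1] = shear (C t) X := by
  refine binaryForm_injective ?_
  rw [binaryForm_actPoly, binaryForm_shear]
  congr 2
  ext i j : 2
  fin_cases i <;> fin_cases j <;> simp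

theorem actPoly_swap : actPoly k d !![0, 1; 1, 0] = X ∘ Fin.rev := by
  refine binaryForm_injective ?_
  rw [binaryForm_actPoly, binaryForm_comp_rev]
  congr 2
  ext i j : 2
  fin_cases i <;> fin_cases j <;> simp

theorem eval_actHom (g : Matrix (Fin 2) (Fin 2) k) (a : Fin (d + 1) → k)
    (I : MvPolynomial (Fin (d + 1)) k) :
    eval a (actHom k d g I) = eval (fun i => eval a (actPoly k d g i)) I := by
  rw [actHom, ← aeval_eq_eval, ← aeval_eq_eval]
  exact aeval_bind₁ _ _ _

theorem mem_invariantRing {I : MvPolynomial (Fin (d + 1)) k} :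
    I ∈ invariantRing k d ↔
      ∀ g : Matrix (Fin 2) (Fin 2) k, g.det = 1 → actHom k d g I = I := by
  rw [invariantRing, Algebra.mem_iInf]
  exact ⟨fun h g hg => h ⟨g, hg⟩, fun h g => h g g.2⟩

theorem eval_shear_of_mem_invariantRing {I : MvPolynomial (Fin (d + 1)) k}
    (hI : I ∈ invariantRing k d) (t : k) (a : Fin (d + 1) → k) :
    eval (shear t a) I = eval a I := by
  have hact := eval_actHom !![1, t; 0, 1] a I
  rw [mem_invariantRing.1 hI _ (by simp), actPoly_upper] at hact
  rw [hact]
  congr 2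
  funext i
  simp [shear]

theorem actHom_swap (I : MvPolynomial (Fin (d + 1)) k) :
    actHom k d !![0, 1; 1, 0] I = rename Fin.rev I := by
  rw [actHom, actPoly_swap, rename_eq_aeval]

theorem rename_rev_mem_invariantRing {I : MvPolynomial (Fin (d + 1)) k}
    (hI : I ∈ invariantRing k d) : rename Fin.rev I ∈ invariantRing k d := by
  refine mem_invariantRing.2 fun g hg => ?_
  have hconj : g * !![0, 1; 1, 0] = !![0, 1; 1, 0] * (!![0, 1; 1, 0] * g * !![0, 1; 1, 0]) := by
    rw [← mul_assoc, ← mul_assoc]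
    simp [← Matrix.one_fin_two]
  rw [← actHom_swap, actHom_actHom, hconj, ← actHom_actHom, mem_invariantRing.1 hI]
  rw [Matrix.det_mul, Matrix.det_mul, hg]
  simp

theorem comp_rev_mem_nullcone {a : Fin (d + 1) → k} :
    a ∘ Fin.rev ∈ nullcone k d ↔ a ∈ nullcone k d := by
  have himp {b : Fin (d + 1) → k} (hb : b ∈ nullcone k d) : b ∘ Fin.rev ∈ nullcone k d := by
    intro I hI n hn hhom
    rw [← eval_rename]
    exact hb _ (rename_rev_mem_invariantRing hI) n hn hhom.rename_isHomogeneous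
  refine ⟨fun h => ?_, himp⟩
  simpa [Function.comp_assoc, Fin.rev_involutive.comp_self] using himp h

theorem shear_mem_nullcone {a : Fin (d + 1) → k} {t : k} :
    shear t a ∈ nullcone k d ↔ a ∈ nullcone k d := by
  refine forall₂_congr fun I hI => ?_
  rw [eval_shear_of_mem_invariantRing hI]

end Action

section Infinitesimal

open LieModule

variable {k : Type*} [Field k] {d : ℕ}

/-- The coordinate function `A_n` on forms of degree `d`, extended by zero to `n > d`. -/
def coeffVar (k : Type*) [Field k] (d n : ℕ) : MvPolynomial (Fin (d + 1)) k :=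
  if h : n < d + 1 then X ⟨n, h⟩ else 0

@[simp]
theorem coeffVar_val (i : Fin (d + 1)) : coeffVar k d i = X i :=
  dif_pos i.2

theorem coeffVar_of_lt {n : ℕ} (hn : d < n) : coeffVar k d n = 0 :=
  dif_neg (by omega)

/-- The derivation `∑ (i + 1) A_{i+1} ∂/∂A_i`, the infinitesimal action of `!![1, t; 0, 1]`. -/
def raising (k : Type*) [Field k] (d : ℕ) :
    Derivation k (MvPolynomial (Fin (d + 1)) k) (MvPolynomial (Fin (d + 1)) k) :=
  mkDerivation k fun i => ((i : ℕ) + 1) • coeffVar k d (i + 1)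

/-- The derivation `∑ (d - i) A_i ∂/∂A_{i+1}`, the infinitesimal action of `!![1, 0; t, 1]`. -/
def lowering (k : Type*) [Field k] (d : ℕ) :
    Derivation k (MvPolynomial (Fin (d + 1)) k) (MvPolynomial (Fin (d + 1)) k) :=
  mkDerivation k (Fin.cases 0 fun i : Fin d => (d - (i : ℕ)) • X i.castSucc)

theorem raising_coeffVar (n : ℕ) :
    raising k d (coeffVar k d n) = (n + 1) • coeffVar k d (n + 1) := by
  by_cases hn : n < d + 1
  · rw [coeffVar, dif_pos hn, raising, mkDerivation_X]
  · rw [coeffVar_of_lt (by omega), coeffVar_of_lt (by omega), map_zero, smul_zero]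

theorem lowering_coeffVar_zero : lowering k d (coeffVar k d 0) = 0 := by
  rw [coeffVar, dif_pos d.succ_pos, lowering, mkDerivation_X]
  rfl

theorem lowering_coeffVar_succ (n : ℕ) :
    lowering k d (coeffVar k d (n + 1)) = (d - n) • coeffVar k d n := by
  by_cases hn : n < d
  · rw [coeffVar, dif_pos (by omega), coeffVar, dif_pos (by omega), lowering, mkDerivation_X]
    rfl
  · rw [coeffVar_of_lt (by omega), Nat.sub_eq_zero_of_le (by omega), map_zero, zero_smul]

theorem rename_rev_coeffVar {n : ℕ} (hn : n ≤ d) :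
    rename Fin.rev (coeffVar k d n) = coeffVar k d (d - n) := by
  rw [coeffVar, dif_pos (by omega), rename_X, ← coeffVar_val, Fin.val_rev, Nat.add_sub_add_right]

theorem lowering_coeffVar_eq_rename_rev {n : ℕ} (hn : n ≤ d) :
    lowering k d (coeffVar k d n) =
      rename Fin.rev (raising k d (rename Fin.rev (coeffVar k d n))) := by
  rw [rename_rev_coeffVar hn, raising_coeffVar]
  rcases n with _ | n
  · rw [lowering_coeffVar_zero, coeffVar_of_lt (by omega), smul_zero, map_zero]
  · rw [lowering_coeffVar_succ, map_nsmul, show d - (n + 1) + 1 = d - n by omega,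
      rename_rev_coeffVar (Nat.sub_le d n), Nat.sub_sub_self (by omega)]

theorem lowering_eq_rename_rev (p : MvPolynomial (Fin (d + 1)) k) :
    lowering k d p = rename Fin.rev (raising k d (rename Fin.rev p)) := by
  induction p using MvPolynomial.induction_on with
  | C a => simp
  | add p q hp hq => simp only [map_add, hp, hq]
  | mul_X p i hp =>
    have hX := lowering_coeffVar_eq_rename_rev (k := k) (Nat.lt_succ_iff.1 i.2)
    rw [coeffVar_val] at hX
    have hinv (q : MvPolynomial (Fin (d + 1)) k) : rename Fin.rev (rename Fin.rev q) = q := by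
      rw [rename_rename, Fin.rev_involutive.comp_self, rename_id_apply]
    simp only [map_mul, Derivation.leibniz, map_add, hp, hX, smul_eq_mul, hinv]

/-- The weight `2i - d` of the coordinate `A_i` under the diagonal torus. -/
def coeffWeight (d : ℕ) (i : Fin (d + 1)) : ℤ := 2 * i - d

theorem weightDerivation_coeffVar (n : ℕ) :
    weightDerivation k (coeffWeight d) (coeffVar k d n) =
      (2 * n - d : ℤ) • coeffVar k d n := by
  by_cases hn : n < d + 1
  · rw [coeffVar, dif_pos hn, weightDerivation, mkDerivation_X]
    rfl
  · rw [coeffVar_of_lt (by omega), map_zero, smul_zero]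

theorem isSl2Triple_raising_lowering [CharZero k] [NeZero d] :
    IsSl2Triple (weightDerivation k (coeffWeight d)) (raising k d) (lowering k d) where
  h_ne_zero h := by
    have h0 := weightDerivation_coeffVar (k := k) (d := d) 0
    rw [h, Derivation.zero_apply, ← Int.cast_smul_eq_zsmul k, eq_comm, smul_eq_zero] at h0
    refine h0.elim (by simp [NeZero.ne d]) ?_
    rw [coeffVar, dif_pos d.succ_pos]
    exact X_ne_zero _
  lie_e_f := by
    refine derivation_ext fun i => ?_
    rw [Derivation.commutator_apply, ← coeffVar_val, weightDerivation_coeffVar]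
    obtain ⟨n, hn⟩ := i
    rcases n with _ | n
    · simp [lowering_coeffVar_zero, raising_coeffVar, lowering_coeffVar_succ]
    · rw [lowering_coeffVar_succ, raising_coeffVar, map_nsmul, map_nsmul, raising_coeffVar,
        lowering_coeffVar_succ, ← natCast_zsmul, ← natCast_zsmul, ← natCast_zsmul,
        ← natCast_zsmul, Nat.cast_sub (by omega), Nat.cast_sub (by omega)]
      push_cast
      module
  lie_h_e_nsmul := by
    refine derivation_ext fun i => ?_
    rw [Derivation.commutator_apply, ← coeffVar_val, weightDerivation_coeffVar, raising_coeffVar]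
    rw [map_nsmul, weightDerivation_coeffVar, map_zsmul, Derivation.smul_apply, raising_coeffVar]
    push_cast
    module
  lie_h_f_nsmul := by
    refine derivation_ext fun i => ?_
    rw [Derivation.commutator_apply, ← coeffVar_val, weightDerivation_coeffVar]
    obtain ⟨n, hn⟩ := i
    rcases n with _ | n
    · simp [lowering_coeffVar_zero]
    · rw [map_zsmul, Derivation.neg_apply, Derivation.smul_apply, lowering_coeffVar_succ,
        map_nsmul, weightDerivation_coeffVar]
      push_cast
      module

theorem exists_raising_pow_eq_zero (p : MvPolynomial (Fin (d + 1)) k) :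
    ∃ n, (toEnd k _ (MvPolynomial (Fin (d + 1)) k) (raising k d) ^ n) p = 0 := by
  refine derivation_exists_pow_eq_zero _ (fun i => ?_) p
  have hpow (m : ℕ) (hm : m ≤ d + 1) :
      (toEnd k _ (MvPolynomial (Fin (d + 1)) k) (raising k d) ^ m)
        (coeffVar k d (d + 1 - m)) = 0 := by
    induction m with
    | zero => simp [coeffVar_of_lt]
    | succ m ih =>
      rw [pow_succ, Module.End.mul_apply, toEnd_apply_apply, Derivation.bracket_eq_fun,
        raising_coeffVar, map_nsmul, show d + 1 - (m + 1) + 1 = d + 1 - m by omega,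
        ih (by omega), smul_zero]
  refine ⟨d + 1 - i, ?_⟩
  have := hpow (d + 1 - i) (by omega)
  rwa [show d + 1 - (d + 1 - (i : ℕ)) = i by omega, coeffVar_val] at this

theorem exists_lowering_pow_eq_zero (p : MvPolynomial (Fin (d + 1)) k) :
    ∃ n, (toEnd k _ (MvPolynomial (Fin (d + 1)) k) (lowering k d) ^ n) p = 0 := by
  refine derivation_exists_pow_eq_zero _ (fun i : Fin (d + 1) => ⟨i + 1, ?_⟩) p
  rw [← coeffVar_val]
  induction (i : ℕ) with
  | zero => simpa using lowering_coeffVar_zero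
  | succ n ih =>
    rw [pow_succ, Module.End.mul_apply, toEnd_apply_apply, Derivation.bracket_eq_fun,
      lowering_coeffVar_succ, map_nsmul, ih, smul_zero]

end Infinitesimal

section Flow

variable {k : Type*} [Field k] {d : ℕ}

theorem eval_flow_eq_self_iff [CharZero k] {σ : Type*} {D : MvPolynomial σ k → MvPolynomial σ k}
    {Φ : MvPolynomial σ k →ₐ[k] Polynomial (MvPolynomial σ k)}
    (hΦ : ∀ p, Polynomial.derivative (Φ p) = Φ (D p)) (hzero : ∀ p, (Φ p).eval 0 = p)
    (I : MvPolynomial σ k) : (∀ s : k, (Φ I).eval (C s) = I) ↔ D I = 0 := by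
  constructor
  · intro hfix
    have hconst : Φ I = Polynomial.C I := by
      refine Polynomial.eq_of_infinite_eval_eq _ _
        ((Set.infinite_range_of_injective (C_injective σ k)).mono ?_)
      rintro _ ⟨s, rfl⟩
      exact (hfix s).trans Polynomial.eval_C.symm
    rw [← hzero (D I), ← hΦ, hconst, Polynomial.derivative_C, Polynomial.eval_zero]
  · intro hD s
    have hconst := Polynomial.eq_C_of_derivative_eq_zero (hΦ I |>.trans <| by rw [hD, map_zero])
    rw [hconst, Polynomial.eval_C, Polynomial.coeff_zero_eq_eval_zero, hzero]

/-- The generic shear `A ↦ shear T A`, as a homomorphism into polynomials in the time `T`. -/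
def shearFlow (k : Type*) [Field k] (d : ℕ) :
    MvPolynomial (Fin (d + 1)) k →ₐ[k] Polynomial (MvPolynomial (Fin (d + 1)) k) :=
  aeval (shear Polynomial.X fun i => Polynomial.C (X i))

theorem shearFlow_coeffVar (n : ℕ) :
    shearFlow k d (coeffVar k d n) = ∑ j : Fin (d + 1),
      ((j : ℕ).choose n : Polynomial (MvPolynomial (Fin (d + 1)) k)) *
        Polynomial.X ^ ((j : ℕ) - n) * Polynomial.C (X j) := by
  by_cases hn : n < d + 1
  · rw [coeffVar, dif_pos hn, shearFlow, aeval_X]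
    rfl
  · rw [coeffVar_of_lt (by omega), map_zero]
    refine (Finset.sum_eq_zero fun j _ => ?_).symm
    rw [Nat.choose_eq_zero_of_lt (by omega), Nat.cast_zero, zero_mul, zero_mul]

theorem derivative_shearFlow_coeffVar (n : ℕ) :
    Polynomial.derivative (shearFlow k d (coeffVar k d n)) =
      shearFlow k d (raising k d (coeffVar k d n)) := by
  rw [raising_coeffVar, map_nsmul, shearFlow_coeffVar, shearFlow_coeffVar, Finset.smul_sum,
    Polynomial.derivative_sum]
  refine Finset.sum_congr rfl fun j _ => ?_
  have hchoose := congrArg (Nat.cast (R := Polynomial (MvPolynomial (Fin (d + 1)) k)))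
    (Nat.choose_succ_right_eq j n)
  rw [← Polynomial.C_eq_natCast, Polynomial.derivative_mul, Polynomial.derivative_C_mul,
    Polynomial.derivative_X_pow, Polynomial.derivative_C, Nat.sub_sub, nsmul_eq_mul]
  simp only [Polynomial.C_eq_natCast]
  push_cast at hchoose ⊢
  linear_combination -(Polynomial.X ^ ((j : ℕ) - (n + 1)) * Polynomial.C (X j)) * hchoose

theorem derivative_shearFlow (p : MvPolynomial (Fin (d + 1)) k) :
    Polynomial.derivative (shearFlow k d p) = shearFlow k d (raising k d p) := by
  induction p using MvPolynomial.induction_on with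
  | C a =>
    rw [derivation_C, map_zero, ← algebraMap_eq, AlgHom.commutes,
      IsScalarTower.algebraMap_apply k (MvPolynomial (Fin (d + 1)) k), Polynomial.algebraMap_apply]
    exact Polynomial.derivative_C
  | add p q hp hq => simp only [map_add, hp, hq]
  | mul_X p i hp =>
    have hX := derivative_shearFlow_coeffVar (k := k) (d := d) i
    rw [coeffVar_val] at hX
    rw [map_mul, Polynomial.derivative_mul, hp, hX, Derivation.leibniz]
    simp only [map_add, smul_eq_mul, map_mul]
    ring

theorem eval_C_shearFlow (s : k) (p : MvPolynomial (Fin (d + 1)) k) :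
    (shearFlow k d p).eval (C s) = actHom k d !![1, s; 0, 1] p := by
  suffices H : ((Polynomial.aeval (R := MvPolynomial (Fin (d + 1)) k) (C s)).restrictScalars k).comp
      (shearFlow k d) = actHom k d !![1, s; 0, 1] from DFunLike.congr_fun H p
  ext1 i
  rw [actHom, aeval_X, actPoly_upper]
  simp only [AlgHom.comp_apply, shearFlow, aeval_X, shear, AlgHom.restrictScalars_apply, map_sum,
    map_mul, map_pow, map_natCast, Polynomial.aeval_X, Polynomial.aeval_C, Algebra.algebraMap_self,
    RingHom.id_apply]

theorem actHom_upper_eq_self_iff [CharZero k] (I : MvPolynomial (Fin (d + 1)) k) :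
    (∀ s : k, actHom k d !![1, s; 0, 1] I = I) ↔ raising k d I = 0 := by
  refine (forall_congr' fun s => by rw [← eval_C_shearFlow]).trans
    (eval_flow_eq_self_iff derivative_shearFlow (fun p => ?_) I)
  rw [← C_0, eval_C_shearFlow, actHom, actPoly_upper, C_0, shear_zero, aeval_X_left_apply]

theorem actHom_lower (s : k) (I : MvPolynomial (Fin (d + 1)) k) :
    actHom k d !![1, 0; s, 1] I =
      rename Fin.rev (actHom k d !![1, s; 0, 1] (rename Fin.rev I)) := by
  rw [← actHom_swap, ← actHom_swap, actHom_actHom, actHom_actHom]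
  congr 2
  rw [Matrix.mul_fin_two, Matrix.mul_fin_two]
  simp

theorem actHom_lower_eq_self_iff [CharZero k] (I : MvPolynomial (Fin (d + 1)) k) :
    (∀ s : k, actHom k d !![1, 0; s, 1] I = I) ↔ lowering k d I = 0 := by
  have hrev (p q : MvPolynomial (Fin (d + 1)) k) :
      rename Fin.rev p = q ↔ p = rename Fin.rev q := by
    constructor <;> rintro rfl <;>
      rw [rename_rename, Fin.rev_involutive.comp_self, rename_id_apply]
  simp only [actHom_lower, lowering_eq_rename_rev, hrev, map_zero, actHom_upper_eq_self_iff]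

theorem upper_lower_factorization {a b c d : k} (hdet : a * d - b * c = 1) (hc : c ≠ 0) :
    !![a, b; c, d] = !![1, (a - 1) / c; 0, 1] * !![1, 0; c, 1] * !![1, (d - 1) / c; 0, 1] := by
  rw [Matrix.mul_fin_two, Matrix.mul_fin_two]
  congr! 4
  · field_simp
    ring
  · field_simp
    linear_combination -hdet
  · ring
  · simp [mul_div_cancel₀ _ hc]

theorem det_one_mem_of_upper_lower_mem {M : Subsemigroup (Matrix (Fin 2) (Fin 2) k)}
    (hupper : ∀ s : k, !![1, s; 0, 1] ∈ M) (hlower : ∀ s : k, !![1, 0; s, 1] ∈ M)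
    {g : Matrix (Fin 2) (Fin 2) k} (hg : g.det = 1) : g ∈ M := by
  have hne {h : Matrix (Fin 2) (Fin 2) k} (hh : h.det = 1) (hc : h 1 0 ≠ 0) : h ∈ M := by
    rw [Matrix.det_fin_two] at hh
    rw [Matrix.eta_fin_two h, upper_lower_factorization hh hc]
    exact mul_mem (mul_mem (hupper _) (hlower _)) (hupper _)
  by_cases hc : g 1 0 = 0
  · have ha : g 0 0 ≠ 0 := by
      intro ha
      simp [Matrix.det_fin_two, ha, hc] at hg
    have hmem : !![1, 0; 1, 1] * g ∈ M := by
      refine hne (by rw [Matrix.det_mul, hg]; simp) ?_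
      simpa [Matrix.mul_apply, Fin.sum_univ_two, hc] using ha
    have hgM := mul_mem (hlower (-1)) hmem
    rw [← mul_assoc] at hgM
    simpa [← Matrix.one_fin_two] using hgM
  · exact hne hg hc

theorem mem_invariantRing_iff [CharZero k] {I : MvPolynomial (Fin (d + 1)) k} :
    I ∈ invariantRing k d ↔ raising k d I = 0 ∧ lowering k d I = 0 := by
  rw [mem_invariantRing, ← actHom_upper_eq_self_iff, ← actHom_lower_eq_self_iff]
  refine ⟨fun h => ⟨fun s => h _ (by simp), fun s => h _ (by simp)⟩,
    fun ⟨hupper, hlower⟩ g hg => ?_⟩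
  let M : Subsemigroup (Matrix (Fin 2) (Fin 2) k) :=
    { carrier := {g | actHom k d g I = I}
      mul_mem' := fun {h g} hh hg => by
        exact (actHom_actHom g h I).symm.trans ((congrArg _ hg).trans hh) }
  exact det_one_mem_of_upper_lower_mem (M := M) hupper hlower hg

end Flow

section CoeffDegree

variable {σ τ k : Type*} [CommSemiring k]

/-- A polynomial whose coefficients are themselves polynomials, homogeneous of degree `e`. -/
def HasCoeffDegree (f : MvPolynomial τ (MvPolynomial σ k)) (e : ℕ) : Prop :=
  ∀ m, (coeff m f).IsHomogeneous e

theorem HasCoeffDegree.sum {ι : Type*} {s : Finset ι} {f : ι → MvPolynomial τ (MvPolynomial σ k)}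
    {e : ℕ} (hf : ∀ i ∈ s, HasCoeffDegree (f i) e) : HasCoeffDegree (∑ i ∈ s, f i) e := by
  intro m
  rw [coeff_sum]
  exact IsHomogeneous.sum _ _ _ fun i hi => hf i hi m

theorem HasCoeffDegree.mul {f g : MvPolynomial τ (MvPolynomial σ k)} {e e' : ℕ}
    (hf : HasCoeffDegree f e) (hg : HasCoeffDegree g e') : HasCoeffDegree (f * g) (e + e') := by
  classical
  intro m
  rw [coeff_mul]
  exact IsHomogeneous.sum _ _ _ fun x _ => (hf x.1).mul (hg x.2)

theorem HasCoeffDegree.C {p : MvPolynomial σ k} {e : ℕ} (hp : p.IsHomogeneous e) :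
    HasCoeffDegree (C p : MvPolynomial τ (MvPolynomial σ k)) e := by
  classical
  intro m
  rw [coeff_C]
  split_ifs
  · exact hp
  · exact isHomogeneous_zero _ _ _

theorem HasCoeffDegree.map_C (f : MvPolynomial τ k) :
    HasCoeffDegree (map (MvPolynomial.C : k →+* MvPolynomial σ k) f) 0 := by
  intro m
  rw [coeff_map]
  exact isHomogeneous_C _ _

theorem homogeneousComponent_aeval {φ : σ → MvPolynomial τ k} (hφ : ∀ i, (φ i).IsHomogeneous 1)
    (n : ℕ) (p : MvPolynomial σ k) :
    homogeneousComponent n (aeval φ p) = aeval φ (homogeneousComponent n p) := by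
  induction p using MvPolynomial.induction_on' with
  | monomial m c =>
    have hm : (monomial m c).IsHomogeneous m.degree := isHomogeneous_monomial c rfl
    have hφm := hm.aeval φ hφ
    rw [one_mul] at hφm
    rw [homogeneousComponent_of_mem hm, homogeneousComponent_of_mem hφm, apply_ite (aeval φ),
      map_zero]
  | add p q hp hq => simp only [map_add, hp, hq]

end CoeffDegree

section InvariantRing

variable {k : Type*} [Field k] {d : ℕ}

theorem hasCoeffDegree_binaryForm_X :
    HasCoeffDegree (binaryForm (X : Fin (d + 1) → MvPolynomial (Fin (d + 1)) k)) 1 := by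
  refine HasCoeffDegree.sum fun i _ => ?_
  have hmap := HasCoeffDegree.map_C (σ := Fin (d + 1))
    (X 0 ^ (i : ℕ) * X 1 ^ (d - (i : ℕ)) : MvPolynomial (Fin 2) k)
  simpa only [map_mul, map_pow, map_X, mul_assoc] using
    (HasCoeffDegree.C (isHomogeneous_X k i)).mul hmap

theorem isHomogeneous_actPoly (g : Matrix (Fin 2) (Fin 2) k) (i : Fin (d + 1)) :
    (actPoly k d g i).IsHomogeneous 1 := by
  suffices H : HasCoeffDegree (linearSubst (g.map C) (binaryForm X)) 1 from H _
  simp only [binaryForm, map_sum]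
  refine HasCoeffDegree.sum fun i _ => ?_
  have hmap := HasCoeffDegree.map_C (σ := Fin (d + 1))
    (linearSubst g (X 0 ^ (i : ℕ) * X 1 ^ (d - (i : ℕ))))
  rw [map_linearSubst] at hmap
  simpa only [map_mul, map_pow, map_X, mul_assoc, linearSubst_C] using
    (HasCoeffDegree.C (isHomogeneous_X k i)).mul hmap

theorem isGradedSubalgebra_invariantRing : IsGradedSubalgebra (invariantRing k d) := by
  intro I hI n
  refine mem_invariantRing.2 fun g hg => ?_
  rw [actHom, ← homogeneousComponent_aeval (isHomogeneous_actPoly g)]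
  exact congrArg _ (mem_invariantRing.1 hI g hg)

theorem isWeightedHomogeneous_of_mem_invariantRing [CharZero k] [NeZero d]
    {I : MvPolynomial (Fin (d + 1)) k} (hI : I ∈ invariantRing k d) :
    I.IsWeightedHomogeneous (coeffWeight d) 0 := by
  obtain ⟨hraise, hlower⟩ := mem_invariantRing_iff.1 hI
  rw [← weightDerivation_eq_zero_iff, ← isSl2Triple_raising_lowering.lie_e_f,
    Derivation.commutator_apply, hraise, hlower, map_zero, map_zero, sub_zero]

theorem mem_nullcone_of_forall_le_two_mul [CharZero k] [NeZero d] {a : Fin (d + 1) → k}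
    (ha : ∀ i : Fin (d + 1), d ≤ 2 * i → a i = 0) : a ∈ nullcone k d := by
  intro I hI n hn hhom
  rw [eval_eq]
  refine Finset.sum_eq_zero fun m hm => ?_
  have hcoeff : coeff m I ≠ 0 := mem_support_iff.1 hm
  obtain ⟨i, hi, hdi⟩ : ∃ i ∈ m.support, d ≤ 2 * i := by
    by_contra! hlt
    have hweight : Finsupp.weight (coeffWeight d) m < 0 := by
      refine Finset.sum_neg (fun i hi => ?_) ?_
      · refine smul_neg_of_pos_of_neg (Nat.pos_of_ne_zero (Finsupp.mem_support_iff.1 hi)) ?_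
        have hi' := hlt i hi
        rw [coeffWeight]
        omega
      · rw [Finsupp.support_nonempty_iff]
        rintro rfl
        exact hcoeff (hhom.coeff_eq_zero (by rw [map_zero]; exact hn.ne))
    exact hweight.ne (isWeightedHomogeneous_of_mem_invariantRing hI hcoeff)
  rw [Finset.prod_eq_zero hi, mul_zero]
  rw [ha i hdi, zero_pow (Finsupp.mem_support_iff.1 hi)]

theorem exists_finset_span_adjoin_of_zeroLocus_subset_nullcone
    [IsAlgClosed k] [CharZero k] [NeZero d] {J : Set (MvPolynomial (Fin (d + 1)) k)}
    (hJ : J ⊆ positivePart (invariantRing k d))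
    (hnull : ∀ a, (∀ j ∈ J, eval a j = 0) → a ∈ nullcone k d) :
    ∃ T : Finset (MvPolynomial (Fin (d + 1)) k),
      (T : Set (MvPolynomial (Fin (d + 1)) k)) ⊆ invariantRing k d ∧
      ∀ x ∈ invariantRing k d, x ∈ Submodule.span (Algebra.adjoin k J)
        (T : Set (MvPolynomial (Fin (d + 1)) k)) := by
  obtain ⟨ρ, hρ⟩ := exists_reynolds_of_isSl2Triple
    (isSl2Triple_raising_lowering (k := k) (d := d))
    exists_raising_pow_eq_zero exists_lowering_pow_eq_zero fun _ => mem_invariantRing_iff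
  refine exists_finset_span_adjoin_of_zeroLocus isGradedSubalgebra_invariantRing ρ hρ hJ ?_
  rintro a ha x ⟨hx, n, hn, hhom⟩
  exact hnull a ha x hx n hn hhom

end InvariantRing

section OmegaProcess

open scoped TensorProduct

variable {R : Type*} [CommRing R]

theorem pderiv_comm {σ : Type*} (i j : σ) (p : MvPolynomial σ R) :
    pderiv i (pderiv j p) = pderiv j (pderiv i p) := by
  have hbracket : ⁅pderiv (R := R) i, pderiv (R := R) j⁆ = 0 := by
    classical
    ext l : 1
    simp [Derivation.commutator_apply, pderiv_X, Pi.single_apply, apply_ite]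
  rw [← sub_eq_zero, ← Derivation.commutator_apply, hbracket, Derivation.zero_apply]

theorem pderiv_linearSubst (g : Matrix (Fin 2) (Fin 2) R) (i : Fin 2) (p : MvPolynomial (Fin 2) R) :
    pderiv i (linearSubst g p) =
      g 0 i • linearSubst g (pderiv 0 p) + g 1 i • linearSubst g (pderiv 1 p) := by
  induction p using MvPolynomial.induction_on with
  | C a => simp
  | add p q hp hq =>
    simp only [map_add, hp, hq, smul_add]
    abel
  | mul_X p j hp =>
    have hX : pderiv i (linearSubst g (X j)) = C (g j i) := by
      fin_cases i <;> simp [pderiv_X]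
    rw [map_mul, Derivation.leibniz, hp, hX, Derivation.leibniz, Derivation.leibniz]
    fin_cases j <;> simp [smul_eq_C_mul, pderiv_X] <;> ring

/-- Cayley's Ω-process `∂/∂X ⊗ ∂/∂Y - ∂/∂Y ⊗ ∂/∂X` on pairs of polynomials in two variables. -/
def omegaProcess (R : Type*) [CommRing R] :
    Module.End R (MvPolynomial (Fin 2) R ⊗[R] MvPolynomial (Fin 2) R) :=
  TensorProduct.map (pderiv 0).toLinearMap (pderiv 1).toLinearMap -
    TensorProduct.map (pderiv 1).toLinearMap (pderiv 0).toLinearMap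

theorem omegaProcess_map_linearSubst (g : Matrix (Fin 2) (Fin 2) R)
    (x : MvPolynomial (Fin 2) R ⊗[R] MvPolynomial (Fin 2) R) :
    omegaProcess R (TensorProduct.map (linearSubst g).toLinearMap (linearSubst g).toLinearMap x) =
      g.det • TensorProduct.map (linearSubst g).toLinearMap (linearSubst g).toLinearMap
        (omegaProcess R x) := by
  induction x with
  | zero => simp
  | add x y hx hy => simp only [map_add, hx, hy, smul_add]
  | tmul p q =>
    simp only [omegaProcess, TensorProduct.map_tmul, AlgHom.toLinearMap_apply,
      LinearMap.sub_apply, Derivation.coeFn_coe, pderiv_linearSubst, TensorProduct.tmul_add,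
      TensorProduct.tmul_smul, TensorProduct.add_tmul, TensorProduct.smul_tmul, smul_add,
      smul_smul, Matrix.det_fin_two, map_sub]
    module

theorem omegaProcess_pow_map_linearSubst (g : Matrix (Fin 2) (Fin 2) R) (r : ℕ)
    (x : MvPolynomial (Fin 2) R ⊗[R] MvPolynomial (Fin 2) R) :
    (omegaProcess R ^ r)
        (TensorProduct.map (linearSubst g).toLinearMap (linearSubst g).toLinearMap x) =
      g.det ^ r • TensorProduct.map (linearSubst g).toLinearMap (linearSubst g).toLinearMap
        ((omegaProcess R ^ r) x) := by
  induction r with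
  | zero => simp
  | succ r ih =>
    rw [pow_succ', Module.End.mul_apply, ih, map_smul, omegaProcess_map_linearSubst, smul_smul,
      ← pow_succ, Module.End.mul_apply]

theorem omegaProcess_pow_tmul (r : ℕ) (f h : MvPolynomial (Fin 2) R) :
    (omegaProcess R ^ r) (f ⊗ₜ h) = ∑ j ∈ Finset.range (r + 1), ((-1 : R) ^ j * (r.choose j : R)) •
      ((pderiv 0)^[r - j] ((pderiv 1)^[j] f) ⊗ₜ (pderiv 0)^[j] ((pderiv 1)^[r - j] h)) := by
  let A : Module.End R (MvPolynomial (Fin 2) R ⊗[R] MvPolynomial (Fin 2) R) :=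
    TensorProduct.map (pderiv 0).toLinearMap (pderiv 1).toLinearMap
  let B : Module.End R (MvPolynomial (Fin 2) R ⊗[R] MvPolynomial (Fin 2) R) :=
    TensorProduct.map (pderiv 1).toLinearMap (pderiv 0).toLinearMap
  have hpderiv : Commute (pderiv (R := R) (0 : Fin 2)).toLinearMap
      (pderiv (R := R) (1 : Fin 2)).toLinearMap := LinearMap.ext (pderiv_comm 0 1)
  have hAB : Commute A B := by
    rw [Commute, SemiconjBy]
    simp only [A, B, ← TensorProduct.map_mul, hpderiv.eq]
  have hΩ : omegaProcess R = (-1 : R) • B + A := by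
    refine LinearMap.ext fun x => ?_
    simp [omegaProcess, A, B, sub_eq_neg_add]
  rw [hΩ, (hAB.symm.smul_left (-1)).add_pow, LinearMap.sum_apply]
  refine Finset.sum_congr rfl fun j _ => ?_
  have hterm : (B ^ j * A ^ (r - j)) (f ⊗ₜ h) =
      (pderiv 0)^[r - j] ((pderiv 1)^[j] f) ⊗ₜ (pderiv 0)^[j] ((pderiv 1)^[r - j] h) := by
    rw [TensorProduct.map_pow, TensorProduct.map_pow, ← TensorProduct.map_mul,
      ← (hpderiv.pow_pow _ _).eq, TensorProduct.map_tmul]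
    simp only [Module.End.mul_apply, Module.End.pow_apply]
    rfl
  rw [smul_pow, ← hterm, smul_mul_assoc, ← nsmul_eq_mul', ← Nat.cast_smul_eq_nsmul R, mul_smul,
    smul_comm _ (r.choose j : R)]
  rfl

variable {k : Type*} [Field k] [Algebra k R] {n m r : ℕ}

theorem transvectantA_eq_omegaProcess (f h : MvPolynomial (Fin 2) R) :
    transvectantA k R n m r f h =
      C (algebraMap k R ((((m - r).factorial * (n - r).factorial : ℕ) : k) /
        ((n.factorial * m.factorial : ℕ) : k))) *
      LinearMap.mul' R _ ((omegaProcess R ^ r) (f ⊗ₜ h)) := by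
  rw [omegaProcess_pow_tmul, transvectantA, map_sum]
  congr 1
  refine Finset.sum_congr rfl fun j _ => ?_
  rw [map_smul, LinearMap.mul'_apply, smul_eq_C_mul, mul_assoc]

theorem transvectantA_linearSubst (g : Matrix (Fin 2) (Fin 2) R) (f h : MvPolynomial (Fin 2) R) :
    transvectantA k R n m r (linearSubst g f) (linearSubst g h) =
      g.det ^ r • linearSubst g (transvectantA k R n m r f h) := by
  have hmul (x : MvPolynomial (Fin 2) R ⊗[R] MvPolynomial (Fin 2) R) :
      LinearMap.mul' R _
          (TensorProduct.map (linearSubst g).toLinearMap (linearSubst g).toLinearMap x) =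
        linearSubst g (LinearMap.mul' R _ x) := by
    induction x with
    | zero => simp
    | add x y hx hy => simp only [map_add, hx, hy]
    | tmul p q => simp
  have hpow := omegaProcess_pow_map_linearSubst g r (f ⊗ₜ h)
  rw [TensorProduct.map_tmul] at hpow
  rw [transvectantA_eq_omegaProcess, transvectantA_eq_omegaProcess, map_mul, linearSubst_C,
    ← mul_smul_comm, ← hmul, ← map_smul, ← hpow]
  rfl

end OmegaProcess

section Covariant

theorem map_transvectantA {k R S : Type*} [Field k] [CommRing R] [Algebra k R] [CommRing S]
    [Algebra k S] (φ : R →ₐ[k] S) (n m r : ℕ) (f h : MvPolynomial (Fin 2) R) :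
    map φ.toRingHom (transvectantA k R n m r f h) =
      transvectantA k S n m r (map φ.toRingHom f) (map φ.toRingHom h) := by
  have hiter (i : Fin 2) (l : ℕ) (p : MvPolynomial (Fin 2) R) :
      (pderiv i)^[l] (map φ.toRingHom p) = map φ.toRingHom ((pderiv i)^[l] p) :=
    ((show Function.Semiconj (map φ.toRingHom) (pderiv i) (pderiv i) from
      fun _ => pderiv_map.symm).iterate_right l p).symm
  have hφ (c : k) : φ.toRingHom (algebraMap k R c) = algebraMap k S c := φ.commutes c
  simp only [transvectantA, map_mul, map_sum, map_C, hφ, hiter, map_pow, map_neg, map_one,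
    map_natCast]

theorem constantCoeff_linearSubst {A : Type*} [CommSemiring A] (g : Matrix (Fin 2) (Fin 2) A)
    (p : MvPolynomial (Fin 2) A) : constantCoeff (linearSubst g p) = constantCoeff p := by
  induction p using MvPolynomial.induction_on with
  | C a => simp
  | add p q hp hq => simp only [map_add, hp, hq]
  | mul_X p i _ => simp

theorem HasCoeffDegree.pderiv_iterate {σ τ k : Type*} [CommSemiring k]
    {f : MvPolynomial τ (MvPolynomial σ k)} {e : ℕ} (hf : HasCoeffDegree f e) (i : τ) (l : ℕ) :
    HasCoeffDegree ((pderiv i)^[l] f) e := by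
  induction l with
  | zero => exact hf
  | succ l ih =>
    intro m
    rw [Function.iterate_succ_apply', coeff_pderiv]
    have hcast : ((m i : MvPolynomial σ k) + 1).IsHomogeneous 0 := by
      simpa only [map_add, map_natCast, map_one] using isHomogeneous_C σ ((m i : k) + 1)
    exact (ih _).mul hcast

variable {k : Type*} [Field k] {d : ℕ}

/-- A covariant of degree `e` of binary forms of degree `d`: a form with coefficients homogeneous of
degree `e` in `k[A₀, …, A_d]`, compatible with the action of `SL₂(k)` on both sides. -/
structure IsCovariant (f : MvPolynomial (Fin 2) (MvPolynomial (Fin (d + 1)) k)) (e : ℕ) : Prop where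
  map_actHom : ∀ g : Matrix (Fin 2) (Fin 2) k, g.det = 1 →
    map (actHom k d g).toRingHom f = linearSubst (g.map C) f
  hasCoeffDegree : HasCoeffDegree f e

theorem isCovariant_binaryForm_X :
    IsCovariant (binaryForm (X : Fin (d + 1) → MvPolynomial (Fin (d + 1)) k)) 1 where
  map_actHom g _ := by
    rw [map_binaryForm, ← binaryForm_actPoly]
    congr 1
    exact funext fun i => aeval_X _ _
  hasCoeffDegree := hasCoeffDegree_binaryForm_X

namespace IsCovariant

variable {f h : MvPolynomial (Fin 2) (MvPolynomial (Fin (d + 1)) k)} {e e' : ℕ}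

theorem transvectantA (hf : IsCovariant f e) (hh : IsCovariant h e') (n m r : ℕ) :
    IsCovariant (transvectantA k _ n m r f h) (e + e') where
  map_actHom g hg := by
    have hdet : (g.map (C : k →+* MvPolynomial (Fin (d + 1)) k)).det = 1 := by
      rw [← RingHom.mapMatrix_apply, ← RingHom.map_det, hg, map_one]
    rw [map_transvectantA, hf.map_actHom g hg, hh.map_actHom g hg, transvectantA_linearSubst,
      hdet, one_pow, one_smul]
  hasCoeffDegree := by
    rw [← zero_add (e + e')]
    refine (HasCoeffDegree.C (isHomogeneous_C _ _)).mul (HasCoeffDegree.sum fun j _ => ?_)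
    have hcoeff : HasCoeffDegree (C ((-1) ^ j * (r.choose j : MvPolynomial (Fin (d + 1)) k)) :
        MvPolynomial (Fin 2) (MvPolynomial (Fin (d + 1)) k)) 0 := by
      simpa using HasCoeffDegree.C (τ := Fin 2)
        (isHomogeneous_C (Fin (d + 1)) ((-1) ^ j * (r.choose j : k)))
    simpa only [zero_add] using (hcoeff.mul
      ((hf.hasCoeffDegree.pderiv_iterate 1 j).pderiv_iterate 0 (r - j))).mul
        ((hh.hasCoeffDegree.pderiv_iterate 1 (r - j)).pderiv_iterate 0 j)

theorem constantCoeff_mem_positivePart (hf : IsCovariant f e) (he : 0 < e) (c : k) :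
    C c * constantCoeff f ∈ positivePart (invariantRing k d) := by
  refine ⟨?_, e, he, (hf.hasCoeffDegree 0).C_mul c⟩
  refine Subalgebra.mul_mem _ (Subalgebra.algebraMap_mem _ c) ?_
  refine mem_invariantRing.2 fun g hg => ?_
  have hmap := constantCoeff_map (actHom k d g).toRingHom f
  rw [hf.map_actHom g hg, constantCoeff_linearSubst] at hmap
  exact hmap.symm

end IsCovariant

variable (k) in
theorem invariants_subset_positivePart :
    {JP2 k, JP3 k, JP4 k, JP5 k, JP6 k, JP7 k} ⊆ positivePart (invariantRing k 8) := by
  have hoct : IsCovariant (genOct k) 1 := isCovariant_binaryForm_X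
  have hg : IsCovariant (covgP k) 2 := hoct.transvectantA hoct 8 8 4
  have hκ : IsCovariant (covkP k) 2 := hoct.transvectantA hoct 8 8 6
  have hh : IsCovariant (covhP k) 4 := hκ.transvectantA hκ 4 4 2
  have hm : IsCovariant (covmP k) 3 := hoct.transvectantA hκ 8 4 4
  simp only [Set.insert_subset_iff, Set.singleton_subset_iff]
  refine ⟨?_, ?_, ?_, ?_, ?_, ?_⟩
  · have hJ := (hoct.transvectantA hoct 8 8 8).constantCoeff_mem_positivePart
      (Nat.succ_pos _) (2 ^ 2 * 5 * 7)
    simp only [map_mul, map_pow, map_ofNat] at hJ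
    exact hJ
  · exact (hoct.transvectantA hg 8 8 8).constantCoeff_mem_positivePart (Nat.succ_pos _) _
  · have hJ := (hκ.transvectantA hκ 4 4 4).constantCoeff_mem_positivePart
      (Nat.succ_pos _) (2 ^ 9 * 3 * 7 ^ 4)
    simp only [map_mul, map_pow, map_ofNat] at hJ
    exact hJ
  · have hJ := (hm.transvectantA hκ 4 4 4).constantCoeff_mem_positivePart
      (Nat.succ_pos _) (2 ^ 9 * 5 * 7 ^ 5)
    simp only [map_mul, map_pow, map_ofNat] at hJ
    exact hJ
  · have hJ := (hκ.transvectantA hh 4 4 4).constantCoeff_mem_positivePart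
      (Nat.succ_pos _) (2 ^ 14 * 3 ^ 2 * 7 ^ 6)
    simp only [map_mul, map_pow, map_ofNat] at hJ
    exact hJ
  · have hJ := (hm.transvectantA hh 4 4 4).constantCoeff_mem_positivePart
      (Nat.succ_pos _) (2 ^ 14 * 3 * 5 * 7 ^ 7)
    simp only [map_mul, map_pow, map_ofNat] at hJ
    exact hJ

end Covariant

section IteratedDerivatives

variable {A : Type*} [CommSemiring A]

theorem pderiv_iterate_monomial {σ : Type*} (i : σ) (n : ℕ) (s : σ →₀ ℕ) (c : A) :
    (pderiv i)^[n] (monomial s c) =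
      monomial (s - Finsupp.single i n) (c * ((s i).descFactorial n : ℕ)) := by
  induction n with
  | zero => simp
  | succ n ih =>
    rw [Function.iterate_succ_apply', ih, pderiv_monomial, tsub_tsub, ← Finsupp.single_add,
      Nat.descFactorial_succ, Finsupp.tsub_apply, Finsupp.single_eq_same, Nat.cast_mul]
    ring_nf

theorem pderiv_iterate_binaryForm {d : ℕ} (p q : ℕ) (a : Fin (d + 1) → A) :
    (pderiv 0)^[p] ((pderiv 1)^[q] (binaryForm a)) = ∑ i : Fin (d + 1), C (a i) *
      (((i : ℕ).descFactorial p * (d - (i : ℕ)).descFactorial q : ℕ) : MvPolynomial (Fin 2) A) *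
        (X 0 ^ ((i : ℕ) - p) * X 1 ^ (d - (i : ℕ) - q)) := by
  have hsum (j : Fin 2) (n : ℕ) (f : Fin (d + 1) → MvPolynomial (Fin 2) A) :
      (pderiv j)^[n] (∑ i, f i) = ∑ i, (pderiv j)^[n] (f i) := by
    simp only [← Derivation.coeFn_coe, ← Module.End.pow_apply, map_sum]
  rw [binaryForm, hsum, hsum]
  refine Finset.sum_congr rfl fun i _ => ?_
  have hexp : Finsupp.single (0 : Fin 2) (i : ℕ) + Finsupp.single 1 (d - (i : ℕ)) -
      Finsupp.single 1 q - Finsupp.single 0 p =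
        Finsupp.single 0 ((i : ℕ) - p) + Finsupp.single 1 (d - (i : ℕ) - q) := by
    ext j
    fin_cases j <;> simp
  rw [C_mul_X_pow_mul_X_pow, pderiv_iterate_monomial, pderiv_iterate_monomial, hexp,
    ← map_natCast C, ← C_mul, ← mul_assoc, C_mul_X_pow_mul_X_pow]
  congr 1
  simp
  ring

end IteratedDerivatives

section ExplicitTransvectants

variable {R : Type*} [CommRing R]

/-- The coefficients of `784 κ`, where `κ = (f, f)⁶` and the octavic `f` has coefficients `a`. -/
def kappaCoeff (a : Fin 9 → R) : Fin 5 → R :=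
  ![56 * a 0 * a 6 - 21 * a 1 * a 5 + 12 * a 2 * a 4 - 5 * a 3 ^ 2,
    392 * a 0 * a 7 - 70 * a 1 * a 6 + 18 * a 2 * a 5 - 4 * a 3 * a 4,
    1568 * a 0 * a 8 - 49 * a 1 * a 7 - 16 * a 2 * a 6 + 17 * a 3 * a 5 - 8 * a 4 ^ 2,
    392 * a 1 * a 8 - 70 * a 2 * a 7 + 18 * a 3 * a 6 - 4 * a 4 * a 5,
    56 * a 2 * a 8 - 21 * a 3 * a 7 + 12 * a 4 * a 6 - 5 * a 5 ^ 2]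

/-- The coefficients of `1960 g`, where `g = (f, f)⁴` and the octavic `f` has coefficients `a`. -/
def gCoeff (a : Fin 9 → R) : Fin 9 → R :=
  ![56 * a 0 * a 4 - 35 * a 1 * a 3 + 15 * a 2 ^ 2,
    280 * a 0 * a 5 - 84 * a 1 * a 4 + 20 * a 2 * a 3,
    840 * a 0 * a 6 - 70 * a 1 * a 5 - 44 * a 2 * a 4 + 30 * a 3 ^ 2,
    1960 * a 0 * a 7 + 140 * a 1 * a 6 - 120 * a 2 * a 5 + 36 * a 3 * a 4,
    3920 * a 0 * a 8 + 735 * a 1 * a 7 - 110 * a 2 * a 6 - 45 * a 3 * a 5 + 36 * a 4 ^ 2,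
    1960 * a 1 * a 8 + 140 * a 2 * a 7 - 120 * a 3 * a 6 + 36 * a 4 * a 5,
    840 * a 2 * a 8 - 70 * a 3 * a 7 - 44 * a 4 * a 6 + 30 * a 5 ^ 2,
    280 * a 3 * a 8 - 84 * a 4 * a 7 + 20 * a 5 * a 6,
    56 * a 4 * a 8 - 35 * a 5 * a 7 + 15 * a 6 ^ 2]

/-- The coefficients of `24 (q, q)²`, where the quartic `q` has coefficients `c`. -/
def hCoeff (c : Fin 5 → R) : Fin 5 → R :=
  ![8 * c 0 * c 2 - 3 * c 1 ^ 2, 24 * c 0 * c 3 - 4 * c 1 * c 2,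
    48 * c 0 * c 4 + 6 * c 1 * c 3 - 4 * c 2 ^ 2, 24 * c 1 * c 4 - 4 * c 2 * c 3,
    8 * c 2 * c 4 - 3 * c 3 ^ 2]

/-- The coefficients of `280 (f, q)⁴`, where the octavic `f` and the quartic `q` have coefficients
`a` and `c`. -/
def mCoeff (a : Fin 9 → R) (c : Fin 5 → R) : Fin 5 → R :=
  ![280 * a 0 * c 4 - 35 * a 1 * c 3 + 10 * a 2 * c 2 - 5 * a 3 * c 1 + 4 * a 4 * c 0,
    140 * a 1 * c 4 - 40 * a 2 * c 3 + 20 * a 3 * c 2 - 16 * a 4 * c 1 + 20 * a 5 * c 0,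
    60 * a 2 * c 4 - 30 * a 3 * c 3 + 24 * a 4 * c 2 - 30 * a 5 * c 1 + 60 * a 6 * c 0,
    20 * a 3 * c 4 - 16 * a 4 * c 3 + 20 * a 5 * c 2 - 40 * a 6 * c 1 + 140 * a 7 * c 0,
    4 * a 4 * c 4 - 5 * a 5 * c 3 + 10 * a 6 * c 2 - 35 * a 7 * c 1 + 280 * a 8 * c 0]

/-- The invariant pairing `12 (q, q')⁴` of the quartics with coefficients `c` and `c'`. -/
def quarticPairing (c c' : Fin 5 → R) : R :=
  12 * c 0 * c' 4 - 3 * c 1 * c' 3 + 2 * c 2 * c' 2 - 3 * c 3 * c' 1 + 12 * c 4 * c' 0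

/-- The invariant pairing `280 (f, f')⁸` of the octavics with coefficients `a` and `b`. -/
def octavicPairing (a b : Fin 9 → R) : R :=
  280 * a 0 * b 8 - 35 * a 1 * b 7 + 10 * a 2 * b 6 - 5 * a 3 * b 5 + 4 * a 4 * b 4 -
    5 * a 5 * b 3 + 10 * a 6 * b 2 - 35 * a 7 * b 1 + 280 * a 8 * b 0

variable {k : Type*} [Field k] [Algebra k R]

theorem transvectantA_eq_smul {n m r : ℕ} {f h p : MvPolynomial (Fin 2) R} (N : ℕ)
    (hsum : ∑ j ∈ Finset.range (r + 1), C ((-1 : R) ^ j * (r.choose j : R)) *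
      (pderiv 0)^[r - j] ((pderiv 1)^[j] f) * (pderiv 0)^[j] ((pderiv 1)^[r - j] h) = N * p) :
    transvectantA k R n m r f h =
      ((((m - r).factorial * (n - r).factorial : ℕ) : k) / ((n.factorial * m.factorial : ℕ) : k) *
        N) • p := by
  rw [transvectantA, hsum, ← MvPolynomial.algebraMap_eq, ← IsScalarTower.algebraMap_apply,
    ← Algebra.smul_def, mul_smul, Nat.cast_smul_eq_nsmul, nsmul_eq_mul]

theorem transvectantA_smul_smul (n m r : ℕ) (x y : k) (f h : MvPolynomial (Fin 2) R) :
    transvectantA k R n m r (x • f) (y • h) = (x * y) • transvectantA k R n m r f h := by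
  have hsmul (i : Fin 2) (q : ℕ) (z : k) (p : MvPolynomial (Fin 2) R) :
      (pderiv i)^[q] (z • p) = z • (pderiv i)^[q] p :=
    Function.Commute.iterate_left (f := pderiv i) (g := (z • ·))
      (fun p => (pderiv i).map_smul_of_tower z p) q p
  simp only [transvectantA, hsmul, mul_smul_comm, smul_mul_assoc, smul_smul, ← Finset.smul_sum,
    mul_comm x y]

variable [CharZero k] (a b : Fin 9 → R) (c c' : Fin 5 → R)

theorem transvectantA_octavic_six :
    transvectantA k R 8 8 6 (binaryForm a) (binaryForm a) =
      (784⁻¹ : k) • binaryForm (kappaCoeff a) := by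
  rw [transvectantA_eq_smul 518400 (p := binaryForm (kappaCoeff a))]
  · norm_num [Nat.factorial]
  · simp only [pderiv_iterate_binaryForm, Finset.sum_range_succ, Finset.sum_range_zero,
      Fin.sum_univ_succ]
    simp [kappaCoeff, binaryForm, Nat.descFactorial, Nat.choose, Fin.sum_univ_succ, map_ofNat]
    ring

theorem transvectantA_octavic_four :
    transvectantA k R 8 8 4 (binaryForm a) (binaryForm a) =
      (1960⁻¹ : k) • binaryForm (gCoeff a) := by
  rw [transvectantA_eq_smul 1440 (p := binaryForm (gCoeff a))]
  · norm_num [Nat.factorial]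
  · simp only [pderiv_iterate_binaryForm, Finset.sum_range_succ, Finset.sum_range_zero,
      Fin.sum_univ_succ]
    simp [gCoeff, binaryForm, Nat.descFactorial, Nat.choose, Fin.sum_univ_succ, map_ofNat]
    ring

theorem transvectantA_octavic_eight :
    transvectantA k R 8 8 8 (binaryForm a) (binaryForm b) =
      (280⁻¹ : k) • C (octavicPairing a b) := by
  rw [transvectantA_eq_smul 5806080 (p := C (octavicPairing a b))]
  · norm_num [Nat.factorial]
  · simp only [pderiv_iterate_binaryForm, Finset.sum_range_succ, Finset.sum_range_zero,
      Fin.sum_univ_succ]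
    simp [octavicPairing, Nat.descFactorial, Nat.choose, map_ofNat]
    ring

theorem transvectantA_quartic_two :
    transvectantA k R 4 4 2 (binaryForm c) (binaryForm c) =
      (24⁻¹ : k) • binaryForm (hCoeff c) := by
  rw [transvectantA_eq_smul 6 (p := binaryForm (hCoeff c))]
  · norm_num [Nat.factorial]
  · simp only [pderiv_iterate_binaryForm, Finset.sum_range_succ, Finset.sum_range_zero,
      Fin.sum_univ_succ]
    simp [hCoeff, binaryForm, Nat.descFactorial, Nat.choose, Fin.sum_univ_succ, map_ofNat]
    ring

theorem transvectantA_octavic_quartic :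
    transvectantA k R 8 4 4 (binaryForm a) (binaryForm c) =
      (280⁻¹ : k) • binaryForm (mCoeff a c) := by
  rw [transvectantA_eq_smul 144 (p := binaryForm (mCoeff a c))]
  · norm_num [Nat.factorial]
  · simp only [pderiv_iterate_binaryForm, Finset.sum_range_succ, Finset.sum_range_zero,
      Fin.sum_univ_succ]
    simp [mCoeff, binaryForm, Nat.descFactorial, Nat.choose, Fin.sum_univ_succ, map_ofNat]
    ring

theorem transvectantA_quartic_four :
    transvectantA k R 4 4 4 (binaryForm c) (binaryForm c') =
      (12⁻¹ : k) • C (quarticPairing c c') := by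
  rw [transvectantA_eq_smul 48 (p := C (quarticPairing c c'))]
  · norm_num [Nat.factorial]
  · simp only [pderiv_iterate_binaryForm, Finset.sum_range_succ, Finset.sum_range_zero,
      Fin.sum_univ_succ]
    simp [quarticPairing, Nat.descFactorial, Nat.choose, map_ofNat]
    ring

end ExplicitTransvectants

section SpecialOctavic

variable {k : Type*} [Field k] (a : Fin 9 → k)

theorem map_aeval_genOct :
    map (aeval a : MvPolynomial (Fin 9) k →ₐ[k] k).toRingHom (genOct k) = binaryForm a := by
  have hoct : genOct k = binaryForm (X : Fin (8 + 1) → MvPolynomial (Fin (8 + 1)) k) := rfl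
  rw [hoct, map_binaryForm]
  refine congrArg binaryForm (funext fun i => ?_)
  exact aeval_X a i

variable [CharZero k]

theorem map_aeval_covgP :
    map (aeval a : MvPolynomial (Fin 9) k →ₐ[k] k).toRingHom (covgP k) =
      (1960⁻¹ : k) • binaryForm (gCoeff a) := by
  rw [covgP, map_transvectantA, map_aeval_genOct, transvectantA_octavic_four]

theorem map_aeval_covkP :
    map (aeval a : MvPolynomial (Fin 9) k →ₐ[k] k).toRingHom (covkP k) =
      (784⁻¹ : k) • binaryForm (kappaCoeff a) := by
  rw [covkP, map_transvectantA, map_aeval_genOct, transvectantA_octavic_six]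

theorem map_aeval_covhP :
    map (aeval a : MvPolynomial (Fin 9) k →ₐ[k] k).toRingHom (covhP k) =
      (784⁻¹ * 784⁻¹ * 24⁻¹ : k) • binaryForm (hCoeff (kappaCoeff a)) := by
  rw [covhP, map_transvectantA, map_aeval_covkP, transvectantA_smul_smul,
    transvectantA_quartic_two, smul_smul]

theorem map_aeval_covmP :
    map (aeval a : MvPolynomial (Fin 9) k →ₐ[k] k).toRingHom (covmP k) =
      (784⁻¹ * 280⁻¹ : k) • binaryForm (mCoeff a (kappaCoeff a)) := by
  rw [covmP, map_transvectantA, map_aeval_genOct, map_aeval_covkP,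
    ← one_smul k (binaryForm a), transvectantA_smul_smul, transvectantA_octavic_quartic, smul_smul,
    one_mul]

variable {a} in
theorem eval_constantCoeff_transvectantA_octavic {x y : k} {b c : Fin 9 → k}
    {f h : MvPolynomial (Fin 2) (MvPolynomial (Fin 9) k)}
    (hf : map (aeval a : MvPolynomial (Fin 9) k →ₐ[k] k).toRingHom f = x • binaryForm b)
    (hh : map (aeval a : MvPolynomial (Fin 9) k →ₐ[k] k).toRingHom h = y • binaryForm c) :
    eval a (constantCoeff (transvectantA k _ 8 8 8 f h)) =
      x * y * 280⁻¹ * octavicPairing b c := by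
  have hmap := constantCoeff_map (aeval a : MvPolynomial (Fin 9) k →ₐ[k] k).toRingHom
    (transvectantA k _ 8 8 8 f h)
  rw [map_transvectantA, hf, hh, transvectantA_smul_smul, transvectantA_octavic_eight,
    smul_smul, constantCoeff_smul, constantCoeff_C, smul_eq_mul] at hmap
  exact hmap.symm

variable {a} in
theorem eval_constantCoeff_transvectantA_quartic {x y : k} {b c : Fin 5 → k}
    {f h : MvPolynomial (Fin 2) (MvPolynomial (Fin 9) k)}
    (hf : map (aeval a : MvPolynomial (Fin 9) k →ₐ[k] k).toRingHom f = x • binaryForm b)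
    (hh : map (aeval a : MvPolynomial (Fin 9) k →ₐ[k] k).toRingHom h = y • binaryForm c) :
    eval a (constantCoeff (transvectantA k _ 4 4 4 f h)) =
      x * y * 12⁻¹ * quarticPairing b c := by
  have hmap := constantCoeff_map (aeval a : MvPolynomial (Fin 9) k →ₐ[k] k).toRingHom
    (transvectantA k _ 4 4 4 f h)
  rw [map_transvectantA, hf, hh, transvectantA_smul_smul, transvectantA_quartic_four,
    smul_smul, constantCoeff_smul, constantCoeff_C, smul_eq_mul] at hmap
  exact hmap.symm

theorem eval_JP2 : eval a (JP2 k) = 1 / 2 * octavicPairing a a := by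
  have hf := (map_aeval_genOct a).trans (one_smul k _).symm
  simp only [JP2, map_mul, map_pow, map_ofNat, eval_constantCoeff_transvectantA_octavic hf hf]
  ring

theorem eval_JP3 : eval a (JP3 k) = 1 / 12 * octavicPairing a (gCoeff a) := by
  have hf := (map_aeval_genOct a).trans (one_smul k _).symm
  simp only [JP3, map_mul, eval_C,
    eval_constantCoeff_transvectantA_octavic hf (map_aeval_covgP a)]
  ring

theorem eval_JP4 : eval a (JP4 k) = 1 / 2 * quarticPairing (kappaCoeff a) (kappaCoeff a) := by
  simp only [JP4, map_mul, map_pow, map_ofNat,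
    eval_constantCoeff_transvectantA_quartic (map_aeval_covkP a) (map_aeval_covkP a)]
  ring

theorem eval_JP5 : eval a (JP5 k) =
    1 / 48 * quarticPairing (mCoeff a (kappaCoeff a)) (kappaCoeff a) := by
  simp only [JP5, map_mul, map_pow, map_ofNat,
    eval_constantCoeff_transvectantA_quartic (map_aeval_covmP a) (map_aeval_covkP a)]
  ring

theorem eval_JP6 : eval a (JP6 k) =
    1 / 8 * quarticPairing (kappaCoeff a) (hCoeff (kappaCoeff a)) := by
  simp only [JP6, map_mul, map_pow, map_ofNat,
    eval_constantCoeff_transvectantA_quartic (map_aeval_covkP a) (map_aeval_covhP a)]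
  ring

theorem eval_JP7 : eval a (JP7 k) =
    1 / 192 * quarticPairing (mCoeff a (kappaCoeff a)) (hCoeff (kappaCoeff a)) := by
  simp only [JP7, map_mul, map_pow, map_ofNat,
    eval_constantCoeff_transvectantA_quartic (map_aeval_covmP a) (map_aeval_covhP a)]
  ring

variable {a}

theorem kappaCoeff_shear (t : k) : kappaCoeff (shear t a) = shear t (kappaCoeff a) := by
  refine binaryForm_injective
    (smul_right_injective _ (inv_ne_zero (by norm_num : (784 : k) ≠ 0)) ?_)
  dsimp only
  rw [← transvectantA_octavic_six, binaryForm_shear, binaryForm_shear,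
    transvectantA_linearSubst, transvectantA_octavic_six, map_smul, Matrix.det_fin_two_of, mul_one,
    mul_zero, sub_zero, one_pow, one_smul]

end SpecialOctavic
section NullOctavic

variable {k : Type*} [Field k]

/-- The simultaneous vanishing of `J₂, …, J₇` at the octavic with coefficients `a`, in explicit
form: each `J_i` is, up to a nonzero rational factor, the pairing equated to zero below. -/
structure IsNullOctavic (a : Fin 9 → k) : Prop where
  pairing_f_f : octavicPairing a a = 0
  pairing_f_g : octavicPairing a (gCoeff a) = 0
  pairing_kappa_kappa : quarticPairing (kappaCoeff a) (kappaCoeff a) = 0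
  pairing_m_kappa : quarticPairing (mCoeff a (kappaCoeff a)) (kappaCoeff a) = 0
  pairing_kappa_h : quarticPairing (kappaCoeff a) (hCoeff (kappaCoeff a)) = 0
  pairing_m_h : quarticPairing (mCoeff a (kappaCoeff a)) (hCoeff (kappaCoeff a)) = 0

theorem isNullOctavic_iff [CharZero k] {a : Fin 9 → k} : IsNullOctavic a ↔
    ∀ J ∈ ({JP2 k, JP3 k, JP4 k, JP5 k, JP6 k, JP7 k} : Set (MvPolynomial (Fin 9) k)),
      eval a J = 0 := by
  simp only [Set.mem_insert_iff, Set.mem_singleton_iff, forall_eq_or_imp, forall_eq, eval_JP2,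
    eval_JP3, eval_JP4, eval_JP5, eval_JP6, eval_JP7, mul_eq_zero, one_div, inv_eq_zero,
    OfNat.ofNat_ne_zero, false_or]
  exact ⟨fun ⟨h2, h3, h4, h5, h6, h7⟩ => ⟨h2, h3, h4, h5, h6, h7⟩,
    fun ⟨h2, h3, h4, h5, h6, h7⟩ => ⟨h2, h3, h4, h5, h6, h7⟩⟩

theorem gCoeff_comp_rev (a : Fin 9 → k) : gCoeff (a ∘ Fin.rev) = gCoeff a ∘ Fin.rev := by
  funext i
  fin_cases i <;> simp [gCoeff, Fin.rev] <;> ring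

theorem kappaCoeff_comp_rev (a : Fin 9 → k) :
    kappaCoeff (a ∘ Fin.rev) = kappaCoeff a ∘ Fin.rev := by
  funext i
  fin_cases i <;> simp [kappaCoeff, Fin.rev] <;> ring

theorem hCoeff_comp_rev (c : Fin 5 → k) : hCoeff (c ∘ Fin.rev) = hCoeff c ∘ Fin.rev := by
  funext i
  fin_cases i <;> simp [hCoeff, Fin.rev] <;> ring

theorem mCoeff_comp_rev (a : Fin 9 → k) (c : Fin 5 → k) :
    mCoeff (a ∘ Fin.rev) (c ∘ Fin.rev) = mCoeff a c ∘ Fin.rev := by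
  funext i
  fin_cases i <;> simp [mCoeff, Fin.rev] <;> ring

theorem octavicPairing_comp_rev (a b : Fin 9 → k) :
    octavicPairing (a ∘ Fin.rev) (b ∘ Fin.rev) = octavicPairing a b := by
  simp [octavicPairing, Fin.rev]
  ring

theorem quarticPairing_comp_rev (c c' : Fin 5 → k) :
    quarticPairing (c ∘ Fin.rev) (c' ∘ Fin.rev) = quarticPairing c c' := by
  simp [quarticPairing, Fin.rev]
  ring

namespace IsNullOctavic

variable {a : Fin 9 → k}

theorem comp_rev (ha : IsNullOctavic a) : IsNullOctavic (a ∘ Fin.rev) := by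
  obtain ⟨hff, hfg, hκκ, hmκ, hκh, hmh⟩ := ha
  constructor <;>
    simpa only [gCoeff_comp_rev, kappaCoeff_comp_rev, hCoeff_comp_rev, mCoeff_comp_rev,
      octavicPairing_comp_rev, quarticPairing_comp_rev]

protected theorem shear [CharZero k] (ha : IsNullOctavic a) (t : k) :
    IsNullOctavic (shear t a) := by
  refine isNullOctavic_iff.2 fun J hJ => ?_
  rw [eval_shear_of_mem_invariantRing (invariants_subset_positivePart k hJ).1]
  exact isNullOctavic_iff.1 ha J hJ

end IsNullOctavic

end NullOctavic

section Shear

variable {k : Type*} [Field k] {d : ℕ} {a : Fin (d + 1) → k}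

theorem shear_apply_eq_self {m i : Fin (d + 1)} (ha : ∀ j, m < j → a j = 0) (hi : m ≤ i) (t : k) :
    shear t a i = a i := by
  rw [shear, Finset.sum_eq_single i]
  · simp
  · intro j _ hji
    rcases hji.lt_or_gt with hj | hj
    · simp [Nat.choose_eq_zero_of_lt (Fin.lt_def.1 hj)]
    · simp [ha j (hi.trans_lt hj)]
  · simp

theorem shear_castSucc (i : Fin d) (ha : ∀ j, i.succ < j → a j = 0) (t : k) :
    shear t a i.castSucc = a i.castSucc + (i + 1 : k) * t * a i.succ := by
  rw [shear, Finset.sum_eq_add i.castSucc i.succ Fin.castSucc_lt_succ.ne]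
  · simp
  · intro j _ hj
    rcases lt_trichotomy j i.castSucc with hlt | heq | hgt
    · simp [Nat.choose_eq_zero_of_lt (show (j : ℕ) < i from hlt)]
    · exact absurd heq hj.1
    · simp [ha j (lt_of_le_of_ne (Fin.castSucc_lt_iff_succ_le.1 hgt) (Ne.symm hj.2))]
  · simp
  · simp

theorem exists_shear_castSucc_eq_zero [CharZero k] (i : Fin d) (ha : ∀ j, i.succ < j → a j = 0)
    (hi : a i.succ ≠ 0) : ∃ t : k, shear t a i.castSucc = 0 := by
  have hi' : (i + 1 : k) ≠ 0 := Nat.cast_add_one_ne_zero _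
  refine ⟨-a i.castSucc / ((i + 1) * a i.succ), ?_⟩
  rw [shear_castSucc i ha]
  field_simp
  ring

theorem exists_shear_apply_zero_eq_zero [IsAlgClosed k] [NeZero d] (ha : a (Fin.last d) ≠ 0) :
    ∃ t : k, shear t a 0 = 0 := by
  let p : Polynomial k := ∑ j : Fin (d + 1), Polynomial.monomial j (a j)
  have hcoeff : p.coeff d = a (Fin.last d) := by
    rw [Polynomial.finsetSum_coeff, Finset.sum_eq_single (Fin.last d)]
    · simp
    · exact fun j _ hj => Polynomial.coeff_monomial_of_ne _ fun h => hj (Fin.ext h.symm)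
    · simp
  have hdeg : p.degree ≠ 0 := by
    refine (lt_of_lt_of_le ?_ (Polynomial.le_degree_of_ne_zero (hcoeff ▸ ha))).ne'
    exact_mod_cast Nat.pos_of_neZero d
  obtain ⟨t, ht⟩ := IsAlgClosed.exists_root p hdeg
  refine ⟨t, Eq.trans (Finset.sum_congr rfl fun j _ => ?_)
    ((Polynomial.eval_finsetSum _ _ _).symm.trans ht)⟩
  simp [mul_comm]

end Shear

section NullconeCriterion

variable {k : Type*} [Field k] [CharZero k] {a : Fin 9 → k}

theorem mem_nullcone_of_apply_ge_four_eq_zero (h4 : a 4 = 0) (h5 : a 5 = 0) (h6 : a 6 = 0)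
    (h7 : a 7 = 0) (h8 : a 8 = 0) : a ∈ nullcone k 8 := by
  refine mem_nullcone_of_forall_le_two_mul fun i hi => ?_
  fin_cases i <;> first | assumption | simp at hi

theorem mem_nullcone_of_apply_le_four_eq_zero (h0 : a 0 = 0) (h1 : a 1 = 0) (h2 : a 2 = 0)
    (h3 : a 3 = 0) (h4 : a 4 = 0) : a ∈ nullcone k 8 :=
  comp_rev_mem_nullcone.1 (mem_nullcone_of_apply_ge_four_eq_zero h4 h3 h2 h1 h0)

theorem kappaCoeff_shear_eq_zero {m : Fin 5} (hκ : ∀ i, m < i → kappaCoeff a i = 0) (t : k) :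
    ∀ i, m < i → kappaCoeff (shear t a) i = 0 := by
  intro i hi
  rw [kappaCoeff_shear, shear_apply_eq_self hκ hi.le, hκ i hi]

namespace IsNullOctavic

theorem quadratic (ha : IsNullOctavic a) :
    280 * a 0 * a 8 - 35 * a 1 * a 7 + 10 * a 2 * a 6 - 5 * a 3 * a 5 + 2 * a 4 ^ 2 = 0 := by
  have h := ha.pairing_f_f
  rw [octavicPairing] at h
  linear_combination 1 / 2 * h

theorem cubic (ha : IsNullOctavic a) :
    3920 * a 0 * a 4 * a 8 - 2450 * a 0 * a 5 * a 7 + 1050 * a 0 * a 6 ^ 2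
      - 2450 * a 1 * a 3 * a 8 + 735 * a 1 * a 4 * a 7 - 175 * a 1 * a 5 * a 6
      + 1050 * a 2 ^ 2 * a 8 - 175 * a 2 * a 3 * a 7 - 110 * a 2 * a 4 * a 6
      + 75 * a 2 * a 5 ^ 2 + 75 * a 3 ^ 2 * a 6 - 45 * a 3 * a 4 * a 5 + 12 * a 4 ^ 3 = 0 := by
  have h := ha.pairing_f_g
  simp only [octavicPairing, gCoeff, Matrix.cons_val] at h
  linear_combination 1 / 12 * h

end IsNullOctavic

end NullconeCriterion

section TripleRoot

variable {k : Type*} [Field k] [CharZero k] {a : Fin 9 → k}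

namespace IsNullOctavic

theorem apply_six_seven_eq_zero (ha : IsNullOctavic a) (hκ : ∀ i, 1 < i → kappaCoeff a i = 0)
    (hκ0 : kappaCoeff a 0 = 0) (hκ1 : kappaCoeff a 1 ≠ 0) : a 6 = 0 ∧ a 7 = 0 := by
  have hκ2 := hκ 2 (by decide)
  have hκ3 := hκ 3 (by decide)
  have hκ4 := hκ 4 (by decide)
  have hm4 : mCoeff a (kappaCoeff a) 4 = 0 := by
    simpa [quarticPairing, hCoeff, hκ0, hκ1, hκ2, hκ3, hκ4] using ha.pairing_m_h
  have hm3 : mCoeff a (kappaCoeff a) 3 = 0 := by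
    simpa [quarticPairing, hκ0, hκ1, hκ2, hκ3, hκ4] using ha.pairing_m_kappa
  constructor
  · simpa [mCoeff, hκ0, hκ1, hκ2, hκ3, hκ4] using hm3
  · simpa [mCoeff, hκ0, hκ1, hκ2, hκ3, hκ4] using hm4

theorem apply_three_mul_apply_five (ha : IsNullOctavic a) (hκ2 : kappaCoeff a 2 = 0)
    (h6 : a 6 = 0) (h7 : a 7 = 0) : 75 * (a 3 * a 5) = 32 * a 4 ^ 2 := by
  replace hκ2 : 1568 * a 0 * a 8 - 49 * a 1 * a 7 - 16 * a 2 * a 6 + 17 * a 3 * a 5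
    - 8 * a 4 ^ 2 = 0 := hκ2
  have hquadratic := ha.quadratic
  rw [h6, h7] at hκ2 hquadratic
  linear_combination 5 / 3 * hκ2 - 28 / 3 * hquadratic

theorem kappaCoeff_one_eq_zero_of_apply_four_eq_zero (ha : IsNullOctavic a)
    (hκ : ∀ i, 1 < i → kappaCoeff a i = 0) (h4 : a 4 = 0) (h6 : a 6 = 0) (h7 : a 7 = 0) :
    kappaCoeff a 1 = 0 := by
  suffices h25 : a 2 * a 5 = 0 by simp [kappaCoeff, h4, h6, h7, h25, mul_assoc]
  have h35 : a 3 * a 5 = 0 := by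
    simpa [h4] using ha.apply_three_mul_apply_five (hκ 2 (by decide)) h6 h7
  rcases mul_eq_zero.1 h35 with h3 | h5
  · have hκ4 : 56 * a 2 * a 8 - 21 * a 3 * a 7 + 12 * a 4 * a 6 - 5 * a 5 ^ 2 = 0 :=
      hκ 4 (by decide)
    have hcubic := ha.cubic
    rw [h3, h4, h6, h7] at hκ4 hcubic
    refine pow_eq_zero_iff two_ne_zero |>.1 ?_
    linear_combination 4 / 675 * a 2 * hcubic - 1 / 9 * a 2 ^ 2 * hκ4
  · rw [h5, mul_zero]

theorem kappaCoeff_one_eq_zero_of_apply_four_ne_zero (ha : IsNullOctavic a)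
    (hκ : ∀ i, 1 < i → kappaCoeff a i = 0) (hκ0 : kappaCoeff a 0 = 0) (h4 : a 4 ≠ 0)
    (h6 : a 6 = 0) (h7 : a 7 = 0) : kappaCoeff a 1 = 0 := by
  have h35 := ha.apply_three_mul_apply_five (hκ 2 (by decide)) h6 h7
  have hκ3 : 392 * a 1 * a 8 - 70 * a 2 * a 7 + 18 * a 3 * a 6 - 4 * a 4 * a 5 = 0 :=
    hκ 3 (by decide)
  have hκ4 : 56 * a 2 * a 8 - 21 * a 3 * a 7 + 12 * a 4 * a 6 - 5 * a 5 ^ 2 = 0 :=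
    hκ 4 (by decide)
  replace hκ0 : 56 * a 0 * a 6 - 21 * a 1 * a 5 + 12 * a 2 * a 4 - 5 * a 3 ^ 2 = 0 := hκ0
  rw [h6] at hκ0
  rw [h6, h7] at hκ3 hκ4
  have h5 : a 5 ≠ 0 := fun h5 => h4 (by simpa [h5] using h35.symm)
  have h8 : a 8 ≠ 0 := fun h8 => h5 (by simpa [h8] using hκ4)
  have h548 : 5625 * 6 * a 5 ^ 4 = 7 * 5120 * a 8 * a 4 ^ 3 := by
    refine mul_right_cancel₀ h4 ?_
    linear_combination 39375 * (a 8 * a 5 ^ 2 * hκ0 + 21 / 392 * a 5 ^ 3 * hκ3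
      - 12 / 56 * a 4 * a 5 ^ 2 * hκ4 + 5 / 75 * a 8 * (a 3 * a 5 + 32 / 75 * a 4 ^ 2) * h35)
  have hκ1 : a 8 * a 5 * (18 * a 2 * a 5 - 4 * a 3 * a 4) = 0 := by
    linear_combination 18 / 56 * a 5 ^ 2 * hκ4 - 4 / 75 * a 8 * a 4 * h35 + 1 / 21000 * h548
  simpa [kappaCoeff, h5, h6, h7, h8] using hκ1

theorem kappaCoeff_one_eq_zero (ha : IsNullOctavic a) (hκ : ∀ i, 1 < i → kappaCoeff a i = 0)
    (hκ0 : kappaCoeff a 0 = 0) : kappaCoeff a 1 = 0 := by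
  by_contra hκ1
  obtain ⟨h6, h7⟩ := ha.apply_six_seven_eq_zero hκ hκ0 hκ1
  by_cases h4 : a 4 = 0
  · exact hκ1 (ha.kappaCoeff_one_eq_zero_of_apply_four_eq_zero hκ h4 h6 h7)
  · exact hκ1 (ha.kappaCoeff_one_eq_zero_of_apply_four_ne_zero hκ hκ0 h4 h6 h7)

end IsNullOctavic

end TripleRoot

section QuadrupleRoot

variable {k : Type*} [Field k] [CharZero k] {a : Fin 9 → k}

namespace IsNullOctavic

theorem mem_nullcone_of_apply_six_ne_zero (ha : IsNullOctavic a)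
    (hκ : ∀ i, 0 < i → kappaCoeff a i = 0) (h8 : a 8 = 0) (h7 : a 7 = 0) (h6 : a 6 ≠ 0)
    (h5 : a 5 = 0) : a ∈ nullcone k 8 := by
  have h4 : a 4 = 0 := by simpa [kappaCoeff, h5, h6, h7, h8] using hκ 4 (by decide)
  have h3 : a 3 = 0 := by simpa [kappaCoeff, h4, h6, h7, h8] using hκ 3 (by decide)
  have h2 : a 2 = 0 := by simpa [kappaCoeff, h3, h4, h6, h7, h8] using hκ 2 (by decide)
  have h1 : a 1 = 0 := by simpa [kappaCoeff, h2, h3, h6, h7] using hκ 1 (by decide)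
  have h0 : a 0 = 0 := by simpa [h1, h2, h3, h4, h6, h7, h8] using ha.cubic
  exact mem_nullcone_of_apply_le_four_eq_zero h0 h1 h2 h3 h4

theorem exists_apply_eq_of_apply_seven_ne_zero (ha : IsNullOctavic a)
    (hκ : ∀ i, 0 < i → kappaCoeff a i = 0) (h8 : a 8 = 0) (h7 : a 7 ≠ 0) (h6 : a 6 = 0) :
    ∃ s, a 5 = -21 * s ^ 2 * a 7 ∧ a 4 = -70 * s ^ 3 * a 7 ∧ a 3 = -105 * s ^ 4 * a 7 := by
  have hκ2 : 1568 * a 0 * a 8 - 49 * a 1 * a 7 - 16 * a 2 * a 6 + 17 * a 3 * a 5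
    - 8 * a 4 ^ 2 = 0 := hκ 2 (by decide)
  have hκ4 : 56 * a 2 * a 8 - 21 * a 3 * a 7 + 12 * a 4 * a 6 - 5 * a 5 ^ 2 = 0 :=
    hκ 4 (by decide)
  have hquadratic := ha.quadratic
  rw [h6, h8] at hκ2 hκ4 hquadratic
  have h35 : 20 * (a 3 * a 5) = 9 * a 4 ^ 2 := by
    linear_combination 5 / 6 * hκ2 - 7 / 6 * hquadratic
  by_cases h5 : a 5 = 0
  · have h4 : a 4 = 0 := by simpa [h5] using h35.symm
    have h3 : a 3 = 0 := by simpa [h5, h7] using hκ4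
    exact ⟨0, by simp [h5], by simp [h4], by simp [h3]⟩
  · obtain ⟨s, hs⟩ : ∃ s, a 4 = 10 / 3 * s * a 5 := ⟨3 * a 4 / (10 * a 5), by field_simp⟩
    have h3 : a 3 = 5 * s ^ 2 * a 5 := mul_right_cancel₀ h5 <| by
      rw [hs] at h35
      linear_combination 1 / 20 * h35
    have h57 : a 5 = -21 * s ^ 2 * a 7 := mul_right_cancel₀ h5 <| by
      rw [h3] at hκ4
      linear_combination -1 / 5 * hκ4
    exact ⟨s, h57, by rw [hs, h57]; ring, by rw [h3, h57]; ring⟩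

theorem mem_nullcone_of_apply_seven_ne_zero (ha : IsNullOctavic a)
    (hκ : ∀ i, 0 < i → kappaCoeff a i = 0) (h8 : a 8 = 0) (h7 : a 7 ≠ 0) (h6 : a 6 = 0) :
    a ∈ nullcone k 8 := by
  obtain ⟨s, h5, h4, h3⟩ := ha.exists_apply_eq_of_apply_seven_ne_zero hκ h8 h7 h6
  have hκ1 : 392 * a 0 * a 7 - 70 * a 1 * a 6 + 18 * a 2 * a 5 - 4 * a 3 * a 4 = 0 :=
    hκ 1 (by decide)
  have hκ2 : 1568 * a 0 * a 8 - 49 * a 1 * a 7 - 16 * a 2 * a 6 + 17 * a 3 * a 5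
    - 8 * a 4 ^ 2 = 0 := hκ 2 (by decide)
  have hκ3 : 392 * a 1 * a 8 - 70 * a 2 * a 7 + 18 * a 3 * a 6 - 4 * a 4 * a 5 = 0 :=
    hκ 3 (by decide)
  rw [h6, h8, h4, h5] at hκ3
  have h2 : a 2 = -84 * s ^ 5 * a 7 := mul_right_cancel₀ h7 <| by
    linear_combination -1 / 70 * hκ3
  rw [h6, h8, h3, h4, h5] at hκ2
  have h1 : a 1 = -35 * s ^ 6 * a 7 := mul_right_cancel₀ h7 <| by
    linear_combination -1 / 49 * hκ2
  rw [h2, h3, h4, h5, h6] at hκ1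
  have h0 : a 0 = -6 * s ^ 7 * a 7 := mul_right_cancel₀ h7 <| by
    linear_combination 1 / 392 * hκ1
  refine (shear_mem_nullcone (t := -s)).1 (mem_nullcone_of_apply_le_four_eq_zero ?_ ?_ ?_ ?_ ?_)
  all_goals
    simp [shear, Fin.sum_univ_succ, Nat.choose, h0, h1, h2, h3, h4, h5, h6, h8]
    ring

theorem mem_nullcone_of_apply_eight_eq_zero (ha : IsNullOctavic a)
    (hκ : ∀ i, 0 < i → kappaCoeff a i = 0) (h8 : a 8 = 0) : a ∈ nullcone k 8 := by
  have htop7 (j : Fin 9) (hj : 7 < j) : a j = 0 := by fin_cases j <;> simp_all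
  by_cases h7 : a 7 = 0
  · have htop6 (j : Fin 9) (hj : 6 < j) : a j = 0 := by fin_cases j <;> simp_all
    by_cases h6 : a 6 = 0
    · have h5 : a 5 = 0 := by simpa [kappaCoeff, h6, h7, h8] using hκ 4 (by decide)
      have h4 : a 4 = 0 := by simpa [h5, h6, h7, h8] using ha.quadratic
      exact mem_nullcone_of_apply_ge_four_eq_zero h4 h5 h6 h7 h8
    · obtain ⟨t, ht⟩ := exists_shear_castSucc_eq_zero 5 htop6 h6
      have hself (i : Fin 9) (hi : 6 ≤ i) := shear_apply_eq_self htop6 hi t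
      exact (shear_mem_nullcone (t := t)).1 <| (ha.shear t).mem_nullcone_of_apply_six_ne_zero
        (kappaCoeff_shear_eq_zero hκ t) ((hself 8 (by decide)).trans h8)
          ((hself 7 (by decide)).trans h7) ((hself 6 le_rfl).trans_ne h6) ht
  · obtain ⟨t, ht⟩ := exists_shear_castSucc_eq_zero 6 htop7 h7
    have hself (i : Fin 9) (hi : 7 ≤ i) := shear_apply_eq_self htop7 hi t
    exact (shear_mem_nullcone (t := t)).1 <| (ha.shear t).mem_nullcone_of_apply_seven_ne_zero
      (kappaCoeff_shear_eq_zero hκ t) ((hself 8 (by decide)).trans h8)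
        ((hself 7 le_rfl).trans_ne h7) ht

end IsNullOctavic

end QuadrupleRoot

section Nullcone

variable {k : Type*} [Field k] [IsAlgClosed k] [CharZero k] {a : Fin 9 → k}

namespace IsNullOctavic

theorem mem_nullcone_of_kappaCoeff_gt_zero (ha : IsNullOctavic a)
    (hκ : ∀ i, 0 < i → kappaCoeff a i = 0) : a ∈ nullcone k 8 := by
  by_cases h8 : a 8 = 0
  · exact ha.mem_nullcone_of_apply_eight_eq_zero hκ h8
  · have hκ1 := hκ 1 (by decide)
    have hκ2 := hκ 2 (by decide)
    have hκ3 := hκ 3 (by decide)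
    have hκ4 := hκ 4 (by decide)
    have hκ0 : kappaCoeff a 0 = 0 := by
      simpa [quarticPairing, mCoeff, hκ1, hκ2, hκ3, hκ4, h8] using ha.pairing_m_kappa
    have hκ_zero (i : Fin 5) : kappaCoeff a i = 0 := by fin_cases i <;> assumption
    obtain ⟨t, ht⟩ := exists_shear_apply_zero_eq_zero h8
    refine (shear_mem_nullcone (t := t)).1 (comp_rev_mem_nullcone.1 ?_)
    refine (ha.shear t).comp_rev.mem_nullcone_of_apply_eight_eq_zero (fun i _ => ?_) ht
    rw [kappaCoeff_comp_rev, kappaCoeff_shear]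
    simp [shear, hκ_zero]

theorem mem_nullcone_of_kappaCoeff_gt_one (ha : IsNullOctavic a)
    (hκ : ∀ i, 1 < i → kappaCoeff a i = 0) : a ∈ nullcone k 8 := by
  suffices hκ1 : kappaCoeff a 1 = 0 by
    refine ha.mem_nullcone_of_kappaCoeff_gt_zero fun i hi => ?_
    rcases (Fin.one_le_of_ne_zero hi.ne').eq_or_lt with h1 | h1
    exacts [h1 ▸ hκ1, hκ i h1]
  by_contra hκ1
  obtain ⟨t, ht⟩ := exists_shear_castSucc_eq_zero 0 hκ hκ1
  rw [Fin.castSucc_zero, ← kappaCoeff_shear] at ht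
  have h := (ha.shear t).kappaCoeff_one_eq_zero (kappaCoeff_shear_eq_zero hκ t) ht
  rw [kappaCoeff_shear, shear_apply_eq_self hκ le_rfl] at h
  exact hκ1 h

theorem mem_nullcone_of_kappaCoeff_two_four_eq_zero (ha : IsNullOctavic a)
    (hκ2 : kappaCoeff a 2 = 0) (hκ3 : kappaCoeff a 3 ≠ 0) (hκ4 : kappaCoeff a 4 = 0) :
    a ∈ nullcone k 8 := by
  have hκ1 : kappaCoeff a 1 = 0 := by
    have h := ha.pairing_kappa_kappa
    rw [quarticPairing, hκ2, hκ4] at h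
    refine mul_right_cancel₀ hκ3 ?_
    linear_combination -1 / 6 * h
  have hκ0 : kappaCoeff a 0 = 0 := by
    have h := ha.pairing_kappa_h
    simp only [quarticPairing, hCoeff, hκ1, hκ2, hκ4, Matrix.cons_val] at h
    refine mul_right_cancel₀ (pow_ne_zero 2 hκ3) ?_
    linear_combination -1 / 108 * h
  refine comp_rev_mem_nullcone.1 (ha.comp_rev.mem_nullcone_of_kappaCoeff_gt_one fun i hi => ?_)
  rw [kappaCoeff_comp_rev]
  fin_cases i <;> simp_all [Fin.rev]

theorem mem_nullcone_of_kappaCoeff_four_eq_zero (ha : IsNullOctavic a)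
    (hκ4 : kappaCoeff a 4 = 0) : a ∈ nullcone k 8 := by
  have hκ (i : Fin 5) (hi : 3 < i) : kappaCoeff a i = 0 := by fin_cases i <;> simp_all
  by_cases hκ3 : kappaCoeff a 3 = 0
  · have hκ2 : kappaCoeff a 2 = 0 := by
      simpa [quarticPairing, hκ3, hκ4] using ha.pairing_kappa_kappa
    exact ha.mem_nullcone_of_kappaCoeff_gt_one fun i hi => by fin_cases i <;> simp_all
  · obtain ⟨t, ht⟩ := exists_shear_castSucc_eq_zero 2 hκ hκ3
    have hself (i : Fin 5) (hi : 3 ≤ i) : kappaCoeff (shear t a) i = kappaCoeff a i := by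
      rw [kappaCoeff_shear, shear_apply_eq_self hκ hi]
    refine (shear_mem_nullcone (t := t)).1 ?_
    exact (ha.shear t).mem_nullcone_of_kappaCoeff_two_four_eq_zero
      ((congrFun (kappaCoeff_shear t) 2).trans ht) ((hself 3 le_rfl).trans_ne hκ3)
      ((hself 4 (by decide)).trans hκ4)

theorem mem_nullcone (ha : IsNullOctavic a) : a ∈ nullcone k 8 := by
  by_cases hκ4 : kappaCoeff a 4 = 0
  · exact ha.mem_nullcone_of_kappaCoeff_four_eq_zero hκ4
  · obtain ⟨t, ht⟩ := exists_shear_apply_zero_eq_zero hκ4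
    refine (shear_mem_nullcone (t := t)).1 (comp_rev_mem_nullcone.1 ?_)
    refine (ha.shear t).comp_rev.mem_nullcone_of_kappaCoeff_four_eq_zero ?_
    rw [kappaCoeff_comp_rev, kappaCoeff_shear]
    exact ht

end IsNullOctavic

end Nullcone

/-- The ring `R_8` of `SL₂(k)`-invariants of binary octavics is finitely generated as a
module over its subalgebra `k[J_2, J_3, J_4, J_5, J_6, J_7]`. -/
theorem invariantRing_octavics_module_fg (k : Type*) [Field k] [IsAlgClosed k] [CharZero k] :
    ∃ T : Finset (MvPolynomial (Fin 9) k),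
      (T : Set (MvPolynomial (Fin 9) k)) ⊆
          (invariantRing k 8 : Set (MvPolynomial (Fin 9) k)) ∧
      ∀ x ∈ invariantRing k 8,
        x ∈ Submodule.span
          (Algebra.adjoin k {JP2 k, JP3 k, JP4 k, JP5 k, JP6 k, JP7 k})
          (T : Set (MvPolynomial (Fin 9) k)) :=
  exists_finset_span_adjoin_of_zeroLocus_subset_nullcone (invariants_subset_positivePart k)
    fun _ ha => (isNullOctavic_iff.2 ha).mem_nullcone
end
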